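/- arXiv:2208.13180 — 2 statements merged into one kernel-verified Lean document; each statement's English description precedes it below -/
import Mathlib

section
/- Let A = kQ/I be a gentle algebra. Then the number of isomorphism classes of indecomposable non-projective Gorenstein projective A-modules equals the number of arrows of Q lying on oriented cycles with full relations. Equivalently, in terms of the AG-invariant φ_A, it equals the sum over ℓ ≥ 1 of ℓ·φ_A(0, ℓ). -/
open MulOpposite DirectSum

set_option autoImplicit false

/-- The combinatorial data of a finite quiver together with a set of
length-two relations (`rel a b` means that the length-two path `a·b` lies in
the admissible ideal `I`). -/
structure GentleData : Type 1 where
  V : Type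
  A : Type
  [fintypeV : Fintype V]
  [fintypeA : Fintype A]
  [decEqV : DecidableEq V]
  [decEqA : DecidableEq A]
  src : A → V
  tgt : A → V
  rel : A → A → Prop

attribute [instance] GentleData.fintypeV GentleData.fintypeA GentleData.decEqV GentleData.decEqA

/-- The gentleness conditions on a bound quiver `(Q, I)`:
relations are composable length-two paths; at most two arrows start
(resp. end) at every vertex; for every arrow `β` there is at most one arrow `α`
with `αβ ∉ I` and at most one with `αβ ∈ I`, and dually; and there is a bound
on the length of paths avoiding relations (admissibility). -/
def IsGentle (Q : GentleData) : Prop :=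
  (∀ a b, Q.rel a b → Q.tgt a = Q.src b) ∧
  (∀ v : Q.V, Set.ncard {a : Q.A | Q.src a = v} ≤ 2) ∧
  (∀ v : Q.V, Set.ncard {a : Q.A | Q.tgt a = v} ≤ 2) ∧
  (∀ b : Q.A, Set.ncard {a : Q.A | Q.tgt a = Q.src b ∧ ¬ Q.rel a b} ≤ 1) ∧
  (∀ b : Q.A, Set.ncard {a : Q.A | Q.tgt a = Q.src b ∧ Q.rel a b} ≤ 1) ∧
  (∀ a : Q.A, Set.ncard {b : Q.A | Q.src b = Q.tgt a ∧ ¬ Q.rel a b} ≤ 1) ∧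
  (∀ a : Q.A, Set.ncard {b : Q.A | Q.src b = Q.tgt a ∧ Q.rel a b} ≤ 1) ∧
  (∃ N : ℕ, ∀ p : ℕ → Q.A, ¬ ∀ i, i < N → (Q.tgt (p i) = Q.src (p (i+1)) ∧ ¬ Q.rel (p i) (p (i+1))))

/-- Generators of the path algebra: one generator for each vertex (the
corresponding trivial path) and one for each arrow. -/
inductive GenSym (Q : GentleData) : Type
  | vertex : Q.V → GenSym Q
  | arrow : Q.A → GenSym Q

/-- The defining relations of the algebra `kQ/I`: the trivial paths are
orthogonal idempotents summing to `1`, arrows are compatible with the trivial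
paths at their source and target, and the chosen length-two paths vanish. -/
inductive GentleRel (k : Type) [Field k] (Q : GentleData) :
    FreeAlgebra k (GenSym Q) → FreeAlgebra k (GenSym Q) → Prop
  | idem (v : Q.V) : GentleRel k Q
      (FreeAlgebra.ι k (GenSym.vertex v) * FreeAlgebra.ι k (GenSym.vertex v))
      (FreeAlgebra.ι k (GenSym.vertex v))
  | orth (v w : Q.V) (h : v ≠ w) : GentleRel k Q
      (FreeAlgebra.ι k (GenSym.vertex v) * FreeAlgebra.ι k (GenSym.vertex w)) 0
  | sum_idem : GentleRel k Q (∑ v : Q.V, FreeAlgebra.ι k (GenSym.vertex v)) 1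
  | src_mul (a : Q.A) : GentleRel k Q
      (FreeAlgebra.ι k (GenSym.vertex (Q.src a)) * FreeAlgebra.ι k (GenSym.arrow a))
      (FreeAlgebra.ι k (GenSym.arrow a))
  | mul_tgt (a : Q.A) : GentleRel k Q
      (FreeAlgebra.ι k (GenSym.arrow a) * FreeAlgebra.ι k (GenSym.vertex (Q.tgt a)))
      (FreeAlgebra.ι k (GenSym.arrow a))
  | relation (a b : Q.A) (h : Q.rel a b) : GentleRel k Q
      (FreeAlgebra.ι k (GenSym.arrow a) * FreeAlgebra.ι k (GenSym.arrow b)) 0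

/-- The algebra `A = kQ/I` presented by the bound quiver `Q`. -/
abbrev GentleAlgebra (k : Type) [Field k] (Q : GentleData) : Type :=
  RingQuot (GentleRel k Q)

/-- The image in `kQ/I` of a generator. -/
noncomputable def ofGen (k : Type) [Field k] (Q : GentleData) (x : GenSym Q) :
    GentleAlgebra k Q :=
  RingQuot.mkAlgHom k (GentleRel k Q) (FreeAlgebra.ι k x)

/-- The idempotent `e_v ∈ kQ/I` of a vertex `v`. -/
noncomputable def idemOf (k : Type) [Field k] (Q : GentleData) (v : Q.V) :
    GentleAlgebra k Q :=
  ofGen k Q (GenSym.vertex v)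

/-- The element of `kQ/I` given by an arrow `a`. -/
noncomputable def arrOf (k : Type) [Field k] (Q : GentleData) (a : Q.A) :
    GentleAlgebra k Q :=
  ofGen k Q (GenSym.arrow a)

/-- The indecomposable projective right module `e_v A`, as a right submodule
(i.e. `Aᵐᵒᵖ`-submodule) of `A`. -/
noncomputable def vertexModule (k : Type) [Field k] (Q : GentleData) (v : Q.V) :
    Submodule (GentleAlgebra k Q)ᵐᵒᵖ (GentleAlgebra k Q) :=
  Submodule.span (GentleAlgebra k Q)ᵐᵒᵖ {idemOf k Q v}

/-- The right module `αA` generated by an arrow `α`, as a right submodule of `A`. -/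
noncomputable def arrowModule (k : Type) [Field k] (Q : GentleData) (a : Q.A) :
    Submodule (GentleAlgebra k Q)ᵐᵒᵖ (GentleAlgebra k Q) :=
  Submodule.span (GentleAlgebra k Q)ᵐᵒᵖ {arrOf k Q a}

/-- An oriented cycle `c` of length `ℓ` with full relations:
`t(cᵢ) = s(cᵢ₊₁)` and `cᵢ cᵢ₊₁ ∈ I` for all `i` (indices modulo `ℓ`). -/
def IsOCFCycle (Q : GentleData) {ℓ : ℕ} (c : ZMod ℓ → Q.A) : Prop :=
  ∀ i : ZMod ℓ, Q.tgt (c i) = Q.src (c (i + 1)) ∧ Q.rel (c i) (c (i + 1))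

/-- The arrow `a` lies on some oriented cycle with full relations. -/
def OnOCFCycle (Q : GentleData) (a : Q.A) : Prop :=
  ∃ ℓ : ℕ, 1 ≤ ℓ ∧ ∃ c : ZMod ℓ → Q.A, IsOCFCycle Q c ∧ ∃ i : ZMod ℓ, c i = a

/-- The whole quiver `(Q, I)` is an oriented cycle of some length `ℓ ≥ 1` with
full relations. -/
def QuiverIsOCF (Q : GentleData) : Prop :=
  ∃ ℓ : ℕ, 1 ≤ ℓ ∧ ∃ (e : Q.V ≃ ZMod ℓ) (f : Q.A ≃ ZMod ℓ),
    (∀ a, e (Q.src a) = f a) ∧ (∀ a, e (Q.tgt a) = f a + 1) ∧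
    (∀ a b, Q.rel a b ↔ f b = f a + 1)

/-- The quiver `(Q, I)` is a single point: exactly one vertex and no arrows. -/
def QuiverIsPoint (Q : GentleData) : Prop :=
  (∃ v : Q.V, ∀ w : Q.V, w = v) ∧ IsEmpty Q.A

/-- `v` is a common vertex of two distinct oriented cycles with full relations. -/
def TwoCyclesAt (Q : GentleData) (v : Q.V) : Prop :=
  ∃ (ℓ ℓ' : ℕ), 1 ≤ ℓ ∧ 1 ≤ ℓ' ∧ ∃ (c : ZMod ℓ → Q.A) (c' : ZMod ℓ' → Q.A),
    IsOCFCycle Q c ∧ IsOCFCycle Q c' ∧ Function.Injective c ∧ Function.Injective c' ∧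
    (∃ i, Q.tgt (c i) = v) ∧ (∃ j, Q.tgt (c' j) = v) ∧ Set.range c ≠ Set.range c'

/-- The set of vertices lying on an oriented cycle with full relations. -/
def ocfVertexSet (Q : GentleData) : Set Q.V :=
  {v | ∃ a : Q.A, OnOCFCycle Q a ∧ Q.tgt a = v}

/-- Oriented cycles with full relations, identified up to cyclic rotation. -/
def ocfCycleSetoid (Q : GentleData) (ℓ : ℕ) :
    Setoid {c : ZMod ℓ → Q.A // IsOCFCycle Q c ∧ Function.Injective c} where
  r c c' := ∃ t : ZMod ℓ, ∀ i, c'.1 i = c.1 (i + t)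
  iseqv := by
    refine ⟨fun c => ⟨0, fun i => by rw [add_zero]⟩, ?_, ?_⟩
    · rintro c c' ⟨t, ht⟩
      exact ⟨-t, fun i => by rw [ht (i + -t), neg_add_cancel_right]⟩
    · rintro a b c ⟨t, ht⟩ ⟨s, hs⟩
      exact ⟨s + t, fun i => by rw [hs i, ht (i + s), add_assoc]⟩

/-- `AGzero Q ℓ` is the value `φ_A(0, ℓ)` of the AG-invariant: the number of
oriented cycles of length `ℓ` with full relations, counted up to rotation. -/
noncomputable def AGzero (Q : GentleData) (ℓ : ℕ) : ℕ :=
  Nat.card (Quotient (ocfCycleSetoid Q ℓ))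

/-- A (nontrivial) forbidden path with arrows `p 0, …, p (m-1)`:
all consecutive length-two subpaths lie in `I`. -/
def IsForbiddenPath (Q : GentleData) (m : ℕ) (p : ℕ → Q.A) : Prop :=
  ∀ i : ℕ, i + 1 < m → Q.tgt (p i) = Q.src (p (i + 1)) ∧ Q.rel (p i) (p (i + 1))

/-- A (nontrivial) forbidden thread: a maximal forbidden path (of `m ≥ 1`
arrows), i.e. one which cannot be extended on either side. -/
def IsForbiddenThread (Q : GentleData) (m : ℕ) (p : ℕ → Q.A) : Prop :=
  1 ≤ m ∧ IsForbiddenPath Q m p ∧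
  (∀ b : Q.A, Q.tgt b = Q.src (p 0) → ¬ Q.rel b (p 0)) ∧
  (∀ b : Q.A, Q.src b = Q.tgt (p (m - 1)) → ¬ Q.rel (p (m - 1)) b)

/-- A trivial forbidden thread at a vertex `v` (of length `0`). -/
def IsTrivialForbiddenThread (Q : GentleData) (v : Q.V) : Prop :=
  ({a : Q.A | Q.tgt a = v} = ∅) ∨ ({a : Q.A | Q.src a = v} = ∅) ∨
  (∃ b b' : Q.A, {a : Q.A | Q.tgt a = v} = {b} ∧ {a : Q.A | Q.src a = v} = {b'} ∧ ¬ Q.rel b b')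

/-- The set of lengths of the forbidden threads of finite length. -/
def finiteForbiddenThreadLengths (Q : GentleData) : Set ℕ∞ :=
  {n : ℕ∞ | (n = 0 ∧ ∃ v : Q.V, IsTrivialForbiddenThread Q v) ∨
    (∃ m : ℕ, n = (m : ℕ∞) ∧ ∃ p : ℕ → Q.A, IsForbiddenThread Q m p)}

/-- The set of lengths of all forbidden threads; an oriented cycle with full
relations gives rise to a forbidden thread of infinite length. -/
def forbiddenThreadLengths (Q : GentleData) : Set ℕ∞ :=
  finiteForbiddenThreadLengths Q ∪
    {n : ℕ∞ | n = ⊤ ∧ ∃ ℓ : ℕ, 1 ≤ ℓ ∧ ∃ c : ZMod ℓ → Q.A, IsOCFCycle Q c}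

section Dimensions

/-- `projDimLE R n M` : the `R`-module `M` admits a projective resolution of
length at most `n`. -/
def projDimLE (R : Type) [Ring R] (n : ℕ) (M : Type) [AddCommGroup M] [Module R M] : Prop :=
  ∃ (P : ℕ → ModuleCat.{0} R) (d : ∀ i : ℕ, ↥(P (i + 1)) →ₗ[R] ↥(P i)) (ε : ↥(P 0) →ₗ[R] M),
    (∀ i, Module.Projective R ↥(P i)) ∧
    Function.Surjective ε ∧ Function.Exact (d 0) ε ∧
    (∀ i, Function.Exact (d (i + 1)) (d i)) ∧
    (∀ i, n ≤ i → Subsingleton ↥(P (i + 1)))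

/-- `injDimLE R n M` : the `R`-module `M` admits an injective coresolution of
length at most `n`. -/
def injDimLE (R : Type) [Ring R] (n : ℕ) (M : Type) [AddCommGroup M] [Module R M] : Prop :=
  ∃ (E : ℕ → ModuleCat.{0} R) (d : ∀ i : ℕ, ↥(E i) →ₗ[R] ↥(E (i + 1))) (ι : M →ₗ[R] ↥(E 0)),
    (∀ i, Module.Injective R ↥(E i)) ∧
    Function.Injective ι ∧ Function.Exact ι (d 0) ∧
    (∀ i, Function.Exact (d i) (d (i + 1))) ∧
    (∀ i, n ≤ i → Subsingleton ↥(E (i + 1)))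

/-- The projective dimension of a module, in `ℕ∞`. -/
noncomputable def projDim (R : Type) [Ring R] (M : Type) [AddCommGroup M] [Module R M] : ℕ∞ :=
  sInf {n : ℕ∞ | ∃ m : ℕ, n = (m : ℕ∞) ∧ projDimLE R m M}

/-- The injective dimension of a module, in `ℕ∞`. -/
noncomputable def injDim (R : Type) [Ring R] (M : Type) [AddCommGroup M] [Module R M] : ℕ∞ :=
  sInf {n : ℕ∞ | ∃ m : ℕ, n = (m : ℕ∞) ∧ injDimLE R m M}

/-- The global dimension of a ring: the supremum of the projective dimensions
of all finitely generated modules. -/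
noncomputable def globalDim (R : Type) [Ring R] : ℕ∞ :=
  ⨆ (M : ModuleCat.{0} R) (_ : Module.Finite R ↥M), projDim R ↥M

/-- The left self-injective dimension: the injective dimension of `R` as a
left module over itself. -/
noncomputable def leftSelfInjDim (R : Type) [Ring R] : ℕ∞ := injDim R R

/-- The right self-injective dimension: the injective dimension of `R` as a
right module over itself. -/
noncomputable def rightSelfInjDim (R : Type) [Ring R] : ℕ∞ := injDim Rᵐᵒᵖ R

end Dimensions

section Radical

/-- The radical of a module: the intersection of its maximal submodules. -/
def radMod (R : Type) [Ring R] (M : Type) [AddCommGroup M] [Module R M] : Submodule R M :=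
  sInf {N : Submodule R M | IsCoatom N}

/-- The top of a module: the quotient by its radical. -/
abbrev topMod (R : Type) [Ring R] (M : Type) [AddCommGroup M] [Module R M] : Type :=
  M ⧸ radMod R M

/-- The socle of a module: the sum of its simple submodules. -/
def socMod (R : Type) [Ring R] (M : Type) [AddCommGroup M] [Module R M] : Submodule R M :=
  sSup {N : Submodule R M | IsAtom N}

/-- The simple right `A`-module `S(v)` at a vertex `v`, realized as the top of
the indecomposable projective `e_v A`. -/
noncomputable abbrev SimpleAt (k : Type) [Field k] (Q : GentleData) (v : Q.V) : Type :=
  topMod (GentleAlgebra k Q)ᵐᵒᵖ ↥(vertexModule k Q v)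

end Radical

section Gorenstein

/-- An indecomposable module: nontrivial, and admitting no nontrivial direct
sum decomposition. -/
def IndecomposableModule (R : Type) [Ring R] (M : Type) [AddCommGroup M] [Module R M] : Prop :=
  Nontrivial M ∧ ∀ N N' : Submodule R M, IsCompl N N' → N = ⊥ ∨ N' = ⊥

/-- A Gorenstein projective module: a syzygy of an acyclic complex of
projective modules which remains acyclic after applying `Hom(−, R)`. -/
def IsGorensteinProjective (R : Type) [Ring R] (G : Type) [AddCommGroup G] [Module R G] :
    Prop :=
  ∃ (P : ℤ → ModuleCat.{0} R) (d : ∀ n : ℤ, ↥(P n) →ₗ[R] ↥(P (n + 1))),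
    (∀ n, Module.Projective R ↥(P n)) ∧
    (∀ n, Function.Exact (d n) (d (n + 1))) ∧
    (∀ n : ℤ, Function.Exact
      (fun g : ↥(P (n + 1 + 1)) →ₗ[R] R => g ∘ₗ d (n + 1))
      (fun g : ↥(P (n + 1)) →ₗ[R] R => g ∘ₗ d n)) ∧
    Nonempty (G ≃ₗ[R] ↥(LinearMap.range (d (-1))))

/-- An indecomposable non-projective Gorenstein projective module. -/
def IsIndecNonProjGP (R : Type) [Ring R] (M : Type) [AddCommGroup M] [Module R M] : Prop :=
  IndecomposableModule R M ∧ IsGorensteinProjective R M ∧ ¬ Module.Projective R M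

/-- An indecomposable Gorenstein projective module. -/
def IsIndecGP (R : Type) [Ring R] (M : Type) [AddCommGroup M] [Module R M] : Prop :=
  IndecomposableModule R M ∧ IsGorensteinProjective R M

/-- Indecomposable non-projective Gorenstein projective right `A`-modules
(realized as right submodules of `A`), up to isomorphism. -/
noncomputable def npgpSetoid (k : Type) [Field k] (Q : GentleData) :
    Setoid {N : Submodule (GentleAlgebra k Q)ᵐᵒᵖ (GentleAlgebra k Q) //
      IsIndecNonProjGP (GentleAlgebra k Q)ᵐᵒᵖ ↥N} where
  r N N' := Nonempty (↥N.1 ≃ₗ[(GentleAlgebra k Q)ᵐᵒᵖ] ↥N'.1)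
  iseqv := ⟨fun _ => ⟨LinearEquiv.refl _ _⟩, fun ⟨e⟩ => ⟨e.symm⟩, fun ⟨e⟩ ⟨f⟩ => ⟨e.trans f⟩⟩

/-- The number of isomorphism classes of indecomposable non-projective
Gorenstein projective right `A`-modules. -/
noncomputable def numIndecNonProjGP (k : Type) [Field k] (Q : GentleData) : ℕ :=
  Nat.card (Quotient (npgpSetoid k Q))

/-- Indecomposable Gorenstein projective right `A`-modules (realized as right
submodules of `A`), up to isomorphism. -/
noncomputable def gpSetoid (k : Type) [Field k] (Q : GentleData) :
    Setoid {N : Submodule (GentleAlgebra k Q)ᵐᵒᵖ (GentleAlgebra k Q) //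
      IsIndecGP (GentleAlgebra k Q)ᵐᵒᵖ ↥N} where
  r N N' := Nonempty (↥N.1 ≃ₗ[(GentleAlgebra k Q)ᵐᵒᵖ] ↥N'.1)
  iseqv := ⟨fun _ => ⟨LinearEquiv.refl _ _⟩, fun ⟨e⟩ => ⟨e.symm⟩, fun ⟨e⟩ ⟨f⟩ => ⟨e.trans f⟩⟩

end Gorenstein

section Strings

/-- A walk in the quiver: `len` letters, the `i`-th letter (for `1 ≤ i ≤ len`)
joining the vertex `vtx (i-1)` to `vtx i`; a letter `(a, true)` is the arrow
`a` read forwards (direct), and `(a, false)` is its formal inverse. -/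
structure StrWalk (Q : GentleData) : Type where
  len : ℕ
  vtx : ℕ → Q.V
  letter : ℕ → Q.A × Bool

/-- The walk is a string: letters join consecutive vertices, the walk is
reduced (no `a a⁻` nor `a⁻ a`), and it avoids the relations. -/
def IsString (Q : GentleData) (w : StrWalk Q) : Prop :=
  (∀ i : ℕ, 1 ≤ i → i ≤ w.len →
    ((w.letter i).2 = true →
      Q.src (w.letter i).1 = w.vtx (i - 1) ∧ Q.tgt (w.letter i).1 = w.vtx i) ∧
    ((w.letter i).2 = false →
      Q.tgt (w.letter i).1 = w.vtx (i - 1) ∧ Q.src (w.letter i).1 = w.vtx i)) ∧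
  (∀ i : ℕ, 1 ≤ i → i + 1 ≤ w.len →
    (¬ ((w.letter i).1 = (w.letter (i + 1)).1 ∧ (w.letter i).2 ≠ (w.letter (i + 1)).2)) ∧
    ((w.letter i).2 = true → (w.letter (i + 1)).2 = true →
      ¬ Q.rel (w.letter i).1 (w.letter (i + 1)).1) ∧
    ((w.letter i).2 = false → (w.letter (i + 1)).2 = false →
      ¬ Q.rel (w.letter (i + 1)).1 (w.letter i).1))

/-- `M` is the string module `M(w)` of the string `w`: it has a `k`-basis
indexed by the vertices `0, …, len` of the walk, the idempotent of a vertex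
fixes exactly the basis vectors sitting at that vertex, and an arrow moves
basis vectors along the corresponding letters of the walk. -/
def IsStringModule (k : Type) [Field k] (Q : GentleData) (w : StrWalk Q) (M : Type)
    [AddCommGroup M] [Module k M] [Module (GentleAlgebra k Q)ᵐᵒᵖ M] : Prop :=
  (∀ (c : k) (m : M), (algebraMap k (GentleAlgebra k Q)ᵐᵒᵖ c) • m = c • m) ∧
  ∃ b : ℕ → M,
    LinearIndependent k (fun i : Fin (w.len + 1) => b i) ∧
    Submodule.span k (b '' {i : ℕ | i ≤ w.len}) = ⊤ ∧
    (∀ i : ℕ, i ≤ w.len → ∀ v : Q.V,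
      (op (idemOf k Q v)) • b i = if w.vtx i = v then b i else 0) ∧
    (∀ i : ℕ, i ≤ w.len → ∀ a : Q.A,
      (op (arrOf k Q a)) • b i =
        (if i + 1 ≤ w.len ∧ w.letter (i + 1) = (a, true) then b (i + 1) else 0) +
        (if 1 ≤ i ∧ w.letter i = (a, false) then b (i - 1) else 0))

/-- The vertex at position `i` is a source of the walk: the adjacent letters
point away from it. -/
def sourceAt (Q : GentleData) (w : StrWalk Q) (i : ℕ) : Prop :=
  i ≤ w.len ∧ (i = 0 ∨ (w.letter i).2 = false) ∧ (i = w.len ∨ (w.letter (i + 1)).2 = true)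

/-- The vertex at position `i` is a sink of the walk: the adjacent letters
point towards it. -/
def sinkAt (Q : GentleData) (w : StrWalk Q) (i : ℕ) : Prop :=
  i ≤ w.len ∧ (i = 0 ∨ (w.letter i).2 = true) ∧ (i = w.len ∨ (w.letter (i + 1)).2 = false)

/-- Left maximality of the inverse prefix (letters `1, …, i`) of a walk of the
shape "inverse prefix followed by direct suffix": the underlying direct path
out of the vertex at position `i` cannot be prolonged (and, when the prefix is
trivial, no second arrow leaves the starting vertex). -/
def LeftMaxAt (Q : GentleData) (w : StrWalk Q) (i : ℕ) : Prop :=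
  if 1 ≤ i then ∀ α : Q.A, Q.src α = w.vtx 0 → Q.rel (w.letter 1).1 α
  else ∀ α : Q.A, Q.src α = w.vtx 0 → (1 ≤ w.len ∧ α = (w.letter 1).1)

/-- Right maximality of the direct suffix (letters `i+1, …, len`) of a walk of
the shape "inverse prefix followed by direct suffix". -/
def RightMaxAt (Q : GentleData) (w : StrWalk Q) (i : ℕ) : Prop :=
  if i < w.len then ∀ β : Q.A, Q.src β = w.vtx w.len → Q.rel (w.letter w.len).1 β
  else ∀ β : Q.A, Q.src β = w.vtx w.len → (1 ≤ w.len ∧ β = (w.letter w.len).1)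

end Strings

/-!
Write `ε : A → k^V` for the augmentation. Every `a ∈ A` has an expansion
`a = ∑ v, ε_v(a) e_v + ∑ g, g ∂_g(a)` with Fox derivatives `∂_g`, and the sum over the arrows `g` is
direct. Since `∂_g (g a)` involves only the arrows `d` with `gd ∉ I`, the annihilator of `g` in
`e_{t(g)} A` is `dA` when `gd ∈ I` is a relation, and it meets `dA` trivially when `gd` is a nonzero
path. Left multiplications by the arrows of an oriented cycle with full relations therefore form a
totally exact complex of projectives, whose kernels are the modules `gA`. These are indecomposable,
not projective, and determine `g`.

Conversely, let the indecomposable non-projective `K` be the kernel of a differential `P → P'` of a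
complete resolution. Functionals on `K` take values in the arrow ideal, as otherwise some `e_v A`
would split off. A nonzero functional then gives a surjection of `K` onto some `gA`, it extends
to `P`, and this yields a section: so `K ≅ gA`, and moreover `K ∩ Pg ≠ Kg`. Such a failure at `g`
propagates along the resolution to an arrow `b` with `bg ∈ I` and the next kernel. Since the quiver
is finite, the resulting infinite chain of predecessors of `g` closes up to a cycle through `g`.
-/

section Indecomposable

variable {R M N : Type} [Ring R] [AddCommGroup M] [Module R M] [AddCommGroup N] [Module R N]

theorem IndecomposableModule.of_linearEquiv (hM : IndecomposableModule R M) (e : M ≃ₗ[R] N) :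
    IndecomposableModule R N := by
  have := hM.1
  refine ⟨e.symm.toEquiv.nontrivial, fun U U' hU => ?_⟩
  have := hM.2 _ _ ((Submodule.orderIsoMapComap e.symm).isCompl hU)
  rwa [map_eq_bot_iff, map_eq_bot_iff] at this

theorem IndecomposableModule.bijective_of_comp_eq_id (hM : IndecomposableModule R M) [Nontrivial N]
    {f : M →ₗ[R] N} {s : N →ₗ[R] M} (hfs : f ∘ₗ s = LinearMap.id) : Function.Bijective f := by
  have hright : Function.RightInverse s f := LinearMap.congr_fun hfs
  have hidem : IsIdempotentElem (s ∘ₗ f) := LinearMap.ext fun x => congrArg s (hright (f x))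
  refine ⟨LinearMap.ker_eq_bot.1 ?_, hright.surjective⟩
  refine (hM.2 _ _ (LinearMap.IsIdempotentElem.isCompl hidem)).elim (fun h => ?_) (fun h => ?_)
  · obtain ⟨y, hy⟩ := exists_ne (0 : N)
    have hsy : s (f (s y)) = 0 := LinearMap.congr_fun (LinearMap.range_eq_bot.1 h) (s y)
    rw [hright y] at hsy
    exact absurd (by rw [← hright y, hsy, map_zero]) hy
  · exact le_bot_iff.1 (h ▸ LinearMap.ker_le_ker_comp f s)

end Indecomposable

section RightModules

variable {B : Type} [Ring B] {G P : Type} [AddCommGroup G] [Module Bᵐᵒᵖ G] [AddCommGroup P]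
  [Module Bᵐᵒᵖ P]

theorem map_op_smul (f : G →ₗ[Bᵐᵒᵖ] B) (b : B) (x : G) : f (op b • x) = f x * b :=
  map_smul f (op b) x

/-- The homomorphism of right modules `B → G` with `1 ↦ x`. -/
def orbitHom (x : G) : B →ₗ[Bᵐᵒᵖ] G :=
  LinearMap.toSpanSingleton Bᵐᵒᵖ G x ∘ₗ (opLinearEquiv Bᵐᵒᵖ).toLinearMap

@[simp]
theorem orbitHom_apply (x : G) (b : B) : orbitHom x b = op b • x :=
  rfl

theorem exists_functional_ne_zero [Module.Projective Bᵐᵒᵖ P] {x : P} (hx : x ≠ 0) :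
    ∃ f : P →ₗ[Bᵐᵒᵖ] B, f x ≠ 0 := by
  obtain ⟨f, hf⟩ := Module.Projective.exists_dual_ne_zero Bᵐᵒᵖ hx
  exact ⟨(opLinearEquiv Bᵐᵒᵖ).symm.toLinearMap ∘ₗ f, by simpa using hf⟩

theorem eq_sum_op_smul_of_forall_functional [Module.Projective Bᵐᵒᵖ P] {ι : Type} [Fintype ι]
    (b : ι → B) {x : P} (hx : ∀ f : P →ₗ[Bᵐᵒᵖ] B, ∃ u : ι → B, f x = ∑ i, u i * b i) :
    ∃ z : ι → P, x = ∑ i, op (b i) • z i := by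
  obtain ⟨s, hs⟩ := Module.projective_def'.1 ‹Module.Projective Bᵐᵒᵖ P›
  choose u hu using fun p : P =>
    hx ((opLinearEquiv Bᵐᵒᵖ).symm.toLinearMap ∘ₗ Finsupp.lapply p ∘ₗ s)
  have hcoord (p : P) : s x p = ∑ i, op (b i) * op (u p i) := by
    simpa using congrArg op (hu p)
  refine ⟨fun i => ∑ p ∈ (s x).support, op (u p i) • p, ?_⟩
  calc x = Finsupp.linearCombination Bᵐᵒᵖ id (s x) := (LinearMap.congr_fun hs x).symm
    _ = ∑ p ∈ (s x).support, ∑ i, op (b i) • op (u p i) • p := by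
      simp only [Finsupp.linearCombination_apply, Finsupp.sum, hcoord, Finset.sum_smul, mul_smul,
        id]
    _ = ∑ i, op (b i) • ∑ p ∈ (s x).support, op (u p i) • p := by
      rw [Finset.sum_comm]
      simp only [Finset.smul_sum]

theorem exists_eq_op_smul_of_forall_functional [Module.Projective Bᵐᵒᵖ P] {b : B} {x : P}
    (hx : ∀ f : P →ₗ[Bᵐᵒᵖ] B, ∃ u, f x = u * b) : ∃ z, x = op b • z := by
  obtain ⟨z, hz⟩ := eq_sum_op_smul_of_forall_functional (fun _ : Unit => b) fun f =>
    (hx f).imp' (fun u _ => u) fun u hu => by simpa using hu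
  exact ⟨z (), by simpa using hz⟩

/-- Every functional on the submodule `K` of a right module, i.e. every homomorphism `K → B`, is
the restriction of a functional on the whole module. -/
def FunctionalsExtend (K : Submodule Bᵐᵒᵖ P) : Prop :=
  ∀ f : K →ₗ[Bᵐᵒᵖ] B, ∃ F : P →ₗ[Bᵐᵒᵖ] B, F ∘ₗ K.subtype = f

theorem functionalsExtend_ker_of_exact {P₀ P₁ P₂ P₃ : Type} [AddCommGroup P₀] [Module Bᵐᵒᵖ P₀]
    [AddCommGroup P₁] [Module Bᵐᵒᵖ P₁] [AddCommGroup P₂] [Module Bᵐᵒᵖ P₂] [AddCommGroup P₃]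
    [Module Bᵐᵒᵖ P₃] {d₀ : P₀ →ₗ[Bᵐᵒᵖ] P₁} {d₁ : P₁ →ₗ[Bᵐᵒᵖ] P₂} {d₂ : P₂ →ₗ[Bᵐᵒᵖ] P₃}
    (h₀₁ : Function.Exact d₀ d₁) (h₁₂ : Function.Exact d₁ d₂)
    (hHom : Function.Exact (fun g : P₂ →ₗ[Bᵐᵒᵖ] Bᵐᵒᵖ => g ∘ₗ d₁)
      (fun g : P₁ →ₗ[Bᵐᵒᵖ] Bᵐᵒᵖ => g ∘ₗ d₀)) :
    FunctionalsExtend (LinearMap.ker d₂) := by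
  intro f
  let δ : P₁ →ₗ[Bᵐᵒᵖ] LinearMap.ker d₂ := d₁.codRestrict _ h₁₂.apply_apply_eq_zero
  let h : P₁ →ₗ[Bᵐᵒᵖ] Bᵐᵒᵖ := (opLinearEquiv Bᵐᵒᵖ).toLinearMap ∘ₗ f ∘ₗ δ
  have hδ (y : P₀) : δ (d₀ y) = 0 := Subtype.ext (h₀₁.apply_apply_eq_zero y)
  obtain ⟨F, hF⟩ := (hHom h).1 (LinearMap.ext fun y => by simp [h, hδ])
  refine ⟨(opLinearEquiv Bᵐᵒᵖ).symm.toLinearMap ∘ₗ F, LinearMap.ext fun ⟨x, hx⟩ => ?_⟩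
  obtain ⟨y, rfl⟩ := (h₁₂ x).1 hx
  exact congrArg unop (LinearMap.congr_fun hF y)

/-- The submodule `K` of the right module `P` satisfies `K ∩ P b = K b`. -/
def IsPureAt (K : Submodule Bᵐᵒᵖ P) (b : B) : Prop :=
  ∀ z, op b • z ∈ K → ∃ z' ∈ K, op b • z' = op b • z

theorem IsGorensteinProjective.exists_acyclic (hG : IsGorensteinProjective Bᵐᵒᵖ G) :
    ∃ (P : ℤ → ModuleCat.{0} Bᵐᵒᵖ) (d : ∀ n, P n →ₗ[Bᵐᵒᵖ] P (n + 1)),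
      (∀ n, Module.Projective Bᵐᵒᵖ (P n)) ∧ (∀ n, Function.Exact (d n) (d (n + 1))) ∧
      (∀ n, FunctionalsExtend (LinearMap.ker (d n))) ∧
      Nonempty (G ≃ₗ[Bᵐᵒᵖ] LinearMap.ker (d 0)) := by
  obtain ⟨P, d, hP, hd, hHom, ⟨e⟩⟩ := hG
  refine ⟨P, d, hP, hd, fun n => ?_,
    ⟨e.trans (LinearEquiv.ofEq _ _ (hd (-1)).linearMap_ker_eq.symm)⟩⟩
  obtain ⟨m, rfl⟩ : ∃ m, n = m + 1 + 1 := ⟨n - 1 - 1, by ring⟩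
  exact functionalsExtend_ker_of_exact (hd m) (hd (m + 1)) (hHom m)

end RightModules

/-! ### Oriented cycles with full relations -/

section OCFCycles

variable {Q : GentleData}

theorem exists_injective_ocfCycle (hcomp : ∀ a b, Q.rel a b → Q.tgt a = Q.src b)
    (hR : Relator.RightUnique Q.rel) {S : Set Q.A} (hS : ∀ γ ∈ S, ∃ β ∈ S, Q.rel β γ) {γ : Q.A}
    (hγ : γ ∈ S) :
    ∃ ℓ : ℕ, 1 ≤ ℓ ∧
      ∃ c : ZMod ℓ → Q.A, IsOCFCycle Q c ∧ Function.Injective c ∧ c 0 = γ := by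
  choose! f hfS hf using hS
  let F : S → S := fun x => ⟨f x, hfS x x.2⟩
  have hF (x : S) : Q.rel (F x) x := hf x x.2
  have hFinj : Function.Injective F := fun x y hxy => Subtype.ext (hR (hxy ▸ hF x) (hF y))
  let x : S := ⟨γ, hγ⟩
  have hpos : 0 < Function.minimalPeriod F x :=
    Function.minimalPeriod_pos_of_mem_periodicPts (hFinj.mem_periodicPts x)
  set ℓ := Function.minimalPeriod F x
  have : NeZero ℓ := ⟨hpos.ne'⟩
  let p : ZMod ℓ → S := fun i => F^[i.val] x
  have hp_succ (i : ZMod ℓ) : p (i + 1) = F (p i) := by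
    have hval : (i + 1).val = (i.val + 1) % ℓ := by rw [ZMod.val_add, ZMod.val_one_eq_one_mod]; simp
    simp only [p, hval, ← Function.iterate_succ_apply' F]
    exact Function.iterate_mod_minimalPeriod_eq
  have hpinj : Function.Injective p := fun i j hij => ZMod.val_injective ℓ
    (Function.iterate_injOn_Iio_minimalPeriod (ZMod.val_lt i) (ZMod.val_lt j) hij)
  have hrel (i : ZMod ℓ) : Q.rel (p (-i)) (p (-(i + 1))) := by
    have := hp_succ (-(i + 1))
    rw [neg_add_rev, neg_add_cancel_comm] at this
    rw [this, neg_add_rev]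
    exact hF _
  exact ⟨ℓ, hpos, fun i => p (-i), fun i => ⟨hcomp _ _ (hrel i), hrel i⟩,
    Subtype.val_injective.comp (hpinj.comp neg_injective), by simp [p, x]⟩

theorem OnOCFCycle.of_predecessor_closed (hcomp : ∀ a b, Q.rel a b → Q.tgt a = Q.src b)
    (hR : Relator.RightUnique Q.rel) {S : Set Q.A} (hS : ∀ γ ∈ S, ∃ β ∈ S, Q.rel β γ) {γ : Q.A}
    (hγ : γ ∈ S) : OnOCFCycle Q γ :=
  have ⟨ℓ, hℓ, c, hc, _, hc0⟩ := exists_injective_ocfCycle hcomp hR hS hγ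
  ⟨ℓ, hℓ, c, hc, 0, hc0⟩

theorem OnOCFCycle.exists_rel_sequence {γ : Q.A} (h : OnOCFCycle Q γ) :
    ∃ q : ℤ → Q.A, q 0 = γ ∧ ∀ n, Q.rel (q (n + 1)) (q n) := by
  obtain ⟨ℓ, -, c, hc, i, rfl⟩ := h
  refine ⟨fun n => c (i - n), by simp, fun n => ?_⟩
  simpa [sub_add_eq_sub_sub] using (hc (i - n - 1)).2

theorem OnOCFCycle.exists_rel {γ : Q.A} (h : OnOCFCycle Q γ) : ∃ δ, Q.rel γ δ := by
  obtain ⟨ℓ, -, c, hc, i, rfl⟩ := h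
  exact ⟨_, (hc i).2⟩

theorem OnOCFCycle.exists_injective_ocfCycle (hcomp : ∀ a b, Q.rel a b → Q.tgt a = Q.src b)
    (hR : Relator.RightUnique Q.rel) {γ : Q.A} (h : OnOCFCycle Q γ) :
    ∃ ℓ : ℕ, 1 ≤ ℓ ∧
      ∃ c : ZMod ℓ → Q.A, IsOCFCycle Q c ∧ Function.Injective c ∧ c 0 = γ := by
  obtain ⟨ℓ, -, c, hc, hγ⟩ := h
  refine _root_.exists_injective_ocfCycle hcomp hR (S := Set.range c) ?_ hγ
  rintro _ ⟨i, rfl⟩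
  exact ⟨c (i - 1), ⟨i - 1, rfl⟩, by simpa using (hc (i - 1)).2⟩

theorem IsOCFCycle.apply_natCast_eq (hR : Relator.RightUnique Q.rel) {ℓ ℓ' : ℕ}
    {c : ZMod ℓ → Q.A} {c' : ZMod ℓ' → Q.A} (hc : IsOCFCycle Q c) (hc' : IsOCFCycle Q c')
    (h : c 0 = c' 0) (m : ℕ) : c m = c' m := by
  induction m with
  | zero => simpa using h
  | succ m ih =>
    have hrel := (hc m).2
    rw [ih] at hrel
    simpa using hR hrel (hc' m).2

theorem IsOCFCycle.length_dvd (hR : Relator.RightUnique Q.rel) {ℓ ℓ' : ℕ}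
    {c : ZMod ℓ → Q.A} {c' : ZMod ℓ' → Q.A} (hc : IsOCFCycle Q c) (hc' : IsOCFCycle Q c')
    (hinj : Function.Injective c) (h : c 0 = c' 0) : ℓ ∣ ℓ' := by
  have h' : c (ℓ' : ZMod ℓ) = c 0 := by
    simpa [h] using hc.apply_natCast_eq hR hc' h ℓ'
  exact (ZMod.natCast_eq_zero_iff _ _).1 (hinj h')

theorem IsOCFCycle.rotate {ℓ : ℕ} {c : ZMod ℓ → Q.A} (hc : IsOCFCycle Q c) (t : ZMod ℓ) :
    IsOCFCycle Q fun i => c (i + t) := fun i => by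
  simpa only [add_right_comm] using hc (i + t)

/-- The injective oriented cycles of length `ℓ` with full relations: such cycles together with a
choice of starting point. -/
abbrev InjectiveOCFCycle (Q : GentleData) (ℓ : ℕ) : Type :=
  {c : ZMod ℓ → Q.A // IsOCFCycle Q c ∧ Function.Injective c}

theorem card_rotationClass {ℓ : ℕ} (c : InjectiveOCFCycle Q ℓ) :
    Nat.card {c' // Quotient.mk (ocfCycleSetoid Q ℓ) c' = Quotient.mk _ c} = ℓ := by
  let rotation (t : ZMod ℓ) : {c' // Quotient.mk (ocfCycleSetoid Q ℓ) c' = Quotient.mk _ c} :=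
    ⟨⟨fun i => c.1 (i + t), c.2.1.rotate t, c.2.2.comp (add_left_injective t)⟩,
      Quotient.sound (Setoid.symm' _ ⟨t, fun _ => rfl⟩)⟩
  have hbij : Function.Bijective rotation := by
    refine ⟨fun t t' h => ?_, fun ⟨c', hc'⟩ => ?_⟩
    · simpa using c.2.2 (congrFun (congrArg (fun z => z.1.1) h) 0)
    · obtain ⟨t, ht⟩ := Quotient.exact hc'.symm
      exact ⟨t, Subtype.ext (Subtype.ext (funext fun i => (ht i).symm))⟩
  rw [← Nat.card_congr (Equiv.ofBijective rotation hbij), Nat.card_zmod]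

theorem card_injectiveOCFCycle (Q : GentleData) (ℓ : ℕ) [NeZero ℓ] :
    Nat.card (InjectiveOCFCycle Q ℓ) = ℓ * AGzero Q ℓ := by
  have := Fintype.ofFinite (Quotient (ocfCycleSetoid Q ℓ))
  rw [← Nat.card_congr (Equiv.sigmaFiberEquiv (Quotient.mk (ocfCycleSetoid Q ℓ))), Nat.card_sigma]
  have hfibre (x : Quotient (ocfCycleSetoid Q ℓ)) :
      Nat.card {c' // Quotient.mk (ocfCycleSetoid Q ℓ) c' = x} = ℓ :=
    x.inductionOn card_rotationClass
  simp only [hfibre, Finset.sum_const, Finset.card_univ, smul_eq_mul, mul_comm, AGzero,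
    Nat.card_eq_fintype_card]

theorem ncard_onOCFCycle (hcomp : ∀ a b, Q.rel a b → Q.tgt a = Q.src b)
    (hR : Relator.RightUnique Q.rel) :
    Set.ncard {a : Q.A | OnOCFCycle Q a} =
      ∑ ℓ ∈ Finset.range (Fintype.card Q.A + 1), ℓ * AGzero Q ℓ := by
  let start (x : Σ n : Fin (Fintype.card Q.A), InjectiveOCFCycle Q (n.1 + 1)) :
      {a : Q.A | OnOCFCycle Q a} :=
    ⟨x.2.1 0, x.1.1 + 1, Nat.le_add_left _ _, x.2.1, x.2.2.1, 0, rfl⟩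
  have hinj : Function.Injective start := by
    rintro ⟨m, c, hc, hcinj⟩ ⟨n, d, hd, hdinj⟩ h
    have h0 : c 0 = d 0 := congrArg Subtype.val h
    obtain rfl : m = n := Fin.ext <| Nat.succ_injective <|
      Nat.dvd_antisymm (hc.length_dvd hR hd hcinj h0) (hd.length_dvd hR hc hdinj h0.symm)
    obtain rfl : c = d := funext fun t => by simpa using hc.apply_natCast_eq hR hd h0 t.val
    rfl
  have hsurj : Function.Surjective start := by
    rintro ⟨a, ha⟩
    obtain ⟨ℓ, hℓ, c, hc, hcinj, rfl⟩ := ha.exists_injective_ocfCycle hcomp hR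
    obtain ⟨n, rfl⟩ := Nat.exists_eq_add_of_le' hℓ
    have hle : n + 1 ≤ Fintype.card Q.A := by
      simpa only [ZMod.card] using Fintype.card_le_of_injective c hcinj
    exact ⟨⟨⟨n, hle⟩, c, hc, hcinj⟩, rfl⟩
  calc Set.ncard {a : Q.A | OnOCFCycle Q a}
      = Nat.card (Σ n : Fin (Fintype.card Q.A), InjectiveOCFCycle Q (n.1 + 1)) :=
        (Nat.card_congr (Equiv.ofBijective start ⟨hinj, hsurj⟩)).symm
    _ = ∑ n : Fin (Fintype.card Q.A), (n.1 + 1) * AGzero Q (n.1 + 1) := by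
        simp only [Nat.card_sigma, card_injectiveOCFCycle]
    _ = ∑ ℓ ∈ Finset.range (Fintype.card Q.A + 1), ℓ * AGzero Q ℓ := by
        rw [Finset.sum_range_succ', zero_mul, add_zero,
          Fin.sum_univ_eq_sum_range fun n => (n + 1) * AGzero Q (n + 1)]

end OCFCycles

/-- The path `a b` of length two exists in `Q` and does not lie in `I`. -/
def GentleData.Nonrel (Q : GentleData) (a b : Q.A) : Prop :=
  Q.tgt a = Q.src b ∧ ¬ Q.rel a b

/-- The part of the gentleness conditions that governs the right ideals `αA`: relations are
composable, each arrow has at most one continuation inside `I` on either side and at most one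
continuation to the right outside `I`, and (as there are finitely many arrows) paths avoiding `I`
have bounded length. -/
structure IsRightGentle (Q : GentleData) : Prop where
  composable : ∀ a b, Q.rel a b → Q.tgt a = Q.src b
  rel_leftUnique : Relator.LeftUnique Q.rel
  rel_rightUnique : Relator.RightUnique Q.rel
  nonrel_rightUnique : Relator.RightUnique Q.Nonrel
  nonrel_wellFounded : WellFounded fun b a => Q.Nonrel a b

theorem IsGentle.isRightGentle {Q : GentleData} (hQ : IsGentle Q) : IsRightGentle Q := by
  obtain ⟨hcomp, -, -, -, hpred, hsucc', hsucc, N, hN⟩ := hQ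
  refine ⟨hcomp, fun a a' b h h' => ?_, fun a b b' h h' => ?_, fun a b b' h h' => ?_, ?_⟩
  · exact (Set.ncard_le_one (Set.toFinite _)).1 (hpred b) a ⟨hcomp _ _ h, h⟩ a' ⟨hcomp _ _ h', h'⟩
  · exact (Set.ncard_le_one (Set.toFinite _)).1 (hsucc a) b ⟨(hcomp _ _ h).symm, h⟩ b'
      ⟨(hcomp _ _ h').symm, h'⟩
  · exact (Set.ncard_le_one (Set.toFinite _)).1 (hsucc' a) b ⟨h.1.symm, h.2⟩ b' ⟨h'.1.symm, h'.2⟩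
  · rw [wellFounded_iff_isEmpty_descending_chain]
    exact ⟨fun p => hN p.1 fun i _ => p.2 i⟩

namespace GentleAlgebra

variable {k : Type} [Field k] {Q : GentleData}

local notation "𝒜" => GentleAlgebra k Q
local notation "𝐞" => idemOf k Q
local notation "𝐱" => arrOf k Q

section Presentation

theorem idemOf_mul_idemOf (v w : Q.V) : 𝐞 v * 𝐞 w = if v = w then 𝐞 v else 0 := by
  split_ifs with h
  · subst h
    simpa only [idemOf, ofGen, map_mul] using
      RingQuot.mkAlgHom_rel k (GentleRel.idem (k := k) v)
  · simpa only [idemOf, ofGen, map_mul, map_zero] using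
      RingQuot.mkAlgHom_rel k (GentleRel.orth (k := k) v w h)

@[simp]
theorem idemOf_mul_self (v : Q.V) : 𝐞 v * 𝐞 v = 𝐞 v := by
  simp [idemOf_mul_idemOf]

variable (k Q) in
theorem sum_idemOf : ∑ v, 𝐞 v = 1 := by
  simpa only [idemOf, ofGen, map_sum, map_one] using
    RingQuot.mkAlgHom_rel k (GentleRel.sum_idem (k := k) (Q := Q))

@[simp]
theorem idemOf_src_mul_arrOf (g : Q.A) : 𝐞 (Q.src g) * 𝐱 g = 𝐱 g := by
  simpa only [idemOf, arrOf, ofGen, map_mul] using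
    RingQuot.mkAlgHom_rel k (GentleRel.src_mul (k := k) g)

@[simp]
theorem arrOf_mul_idemOf_tgt (g : Q.A) : 𝐱 g * 𝐞 (Q.tgt g) = 𝐱 g := by
  simpa only [idemOf, arrOf, ofGen, map_mul] using
    RingQuot.mkAlgHom_rel k (GentleRel.mul_tgt (k := k) g)

theorem arrOf_mul_arrOf_of_rel {g d : Q.A} (h : Q.rel g d) : 𝐱 g * 𝐱 d = 0 := by
  simpa only [idemOf, arrOf, ofGen, map_mul, map_zero] using
    RingQuot.mkAlgHom_rel k (GentleRel.relation (k := k) g d h)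

theorem idemOf_mul_arrOf (v : Q.V) (g : Q.A) :
    𝐞 v * 𝐱 g = if v = Q.src g then 𝐱 g else 0 := by
  rw [← idemOf_src_mul_arrOf g, ← mul_assoc, idemOf_mul_idemOf]
  split_ifs with h <;> simp [h]

theorem arrOf_mul_idemOf (g : Q.A) (v : Q.V) :
    𝐱 g * 𝐞 v = if Q.tgt g = v then 𝐱 g else 0 := by
  rw [← arrOf_mul_idemOf_tgt g, mul_assoc, idemOf_mul_idemOf]
  split_ifs with h <;> simp

theorem arrOf_mul_arrOf_of_not_nonrel {g d : Q.A} (h : ¬ Q.Nonrel g d) : 𝐱 g * 𝐱 d = 0 := by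
  by_cases hgd : Q.tgt g = Q.src d
  · exact arrOf_mul_arrOf_of_rel (not_not.1 fun hrel => h ⟨hgd, hrel⟩)
  · rw [← idemOf_src_mul_arrOf d, ← mul_assoc, arrOf_mul_idemOf, if_neg hgd, zero_mul]

@[elab_as_elim]
theorem induction {p : 𝒜 → Prop} (algebraMap : ∀ c : k, p (algebraMap k 𝒜 c))
    (idem : ∀ v, p (𝐞 v)) (arr : ∀ g, p (𝐱 g)) (mul : ∀ a b, p a → p b → p (a * b))
    (add : ∀ a b, p a → p b → p (a + b)) (a : 𝒜) : p a := by
  obtain ⟨a, rfl⟩ := RingQuot.mkAlgHom_surjective k (GentleRel k Q) a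
  induction a using FreeAlgebra.induction with
  | grade0 c => rw [AlgHom.commutes]; exact algebraMap c
  | grade1 x => cases x with
    | vertex v => exact idem v
    | arrow g => exact arr g
  | mul a b ha hb => rw [map_mul]; exact mul _ _ ha hb
  | add a b ha hb => rw [map_add]; exact add _ _ ha hb

theorem algHom_ext {E : Type} [Semiring E] [Algebra k E] {φ ψ : 𝒜 →ₐ[k] E}
    (hidem : ∀ v, φ (𝐞 v) = ψ (𝐞 v)) (harr : ∀ g, φ (𝐱 g) = ψ (𝐱 g)) : φ = ψ :=
  AlgHom.ext fun a => by
    induction a using induction with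
    | algebraMap c => rw [AlgHom.commutes, AlgHom.commutes]
    | idem v => exact hidem v
    | arr g => exact harr g
    | mul a b ha hb => rw [map_mul, map_mul, ha, hb]
    | add a b ha hb => rw [map_add, map_add, ha, hb]

/-- The elements `e v` and `x g` of a ring satisfy the defining relations of `kQ/I`. -/
structure SatisfiesRelations (Q : GentleData) {E : Type} [Semiring E] (e : Q.V → E) (x : Q.A → E) :
    Prop where
  idem : ∀ v, e v * e v = e v
  orth : ∀ v w, v ≠ w → e v * e w = 0
  sum_idem : ∑ v, e v = 1
  src_mul : ∀ g, e (Q.src g) * x g = x g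
  mul_tgt : ∀ g, x g * e (Q.tgt g) = x g
  relation : ∀ g d, Q.rel g d → x g * x d = 0

/-- The universal property of `kQ/I`. -/
noncomputable def lift {E : Type} [Semiring E] [Algebra k E] {e : Q.V → E} {x : Q.A → E}
    (h : SatisfiesRelations Q e x) : 𝒜 →ₐ[k] E :=
  RingQuot.liftAlgHom k ⟨FreeAlgebra.lift k fun | .vertex v => e v | .arrow g => x g, by
    rintro _ _ (v | ⟨v, w, hvw⟩ | _ | g | g | ⟨g, d, hgd⟩)
    · simpa using h.idem v
    · simpa using h.orth v w hvw
    · simpa using h.sum_idem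
    · simpa using h.src_mul g
    · simpa using h.mul_tgt g
    · simpa using h.relation g d hgd⟩

section Lift

variable {E : Type} [Semiring E] [Algebra k E] {e : Q.V → E} {x : Q.A → E}
  (h : SatisfiesRelations Q e x)

@[simp]
theorem lift_idemOf (v : Q.V) : lift h (𝐞 v) = e v := by
  simp [lift, idemOf, ofGen]

@[simp]
theorem lift_arrOf (g : Q.A) : lift h (𝐱 g) = x g := by
  simp [lift, arrOf, ofGen]

end Lift

theorem satisfiesRelations_augmentation :
    SatisfiesRelations Q (fun v => (Pi.single v 1 : Q.V → k)) (fun _ => 0) where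
  idem v := by rw [← Pi.single_mul, one_mul]
  orth v w h := by ext u; by_cases hu : u = v <;> aesop
  sum_idem := Finset.univ_sum_single (1 : Q.V → k)
  src_mul _ := mul_zero _
  mul_tgt _ := zero_mul _
  relation _ _ _ := zero_mul _

/-- The augmentation `A → k^V`, whose kernel is the arrow ideal. -/
noncomputable def augmentation : 𝒜 →ₐ[k] Q.V → k :=
  lift satisfiesRelations_augmentation

@[simp]
theorem augmentation_idemOf (v : Q.V) : augmentation (𝐞 v) = Pi.single v 1 :=
  lift_idemOf _ v

@[simp]
theorem augmentation_arrOf (g : Q.A) : augmentation (𝐱 g) = 0 :=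
  lift_arrOf _ g

theorem augmentation_sum_smul_idemOf (c : Q.V → k) : augmentation (∑ v, c v • 𝐞 v) = c := by
  simp [← Pi.single_smul, Finset.univ_sum_single]

end Presentation

/-! ### Fox derivatives -/

section FoxDerivative

noncomputable instance (Q : GentleData) : DecidableRel Q.Nonrel :=
  Classical.decRel _

/-- On the `k`-space `k^V × A^{arrows}` of formal expressions `∑ c_v e_v + ∑ g b_g`, the coefficient
of `g` in the product of the arrow `g` with such an expression. -/
noncomputable def foxCoeff (g : Q.A) : (Q.V → k) × (Q.A → 𝒜) →ₗ[k] 𝒜 :=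
  (LinearMap.toSpanSingleton k 𝒜 (𝐞 (Q.tgt g)) ∘ₗ LinearMap.proj (Q.tgt g)).coprod
    (∑ d with Q.Nonrel g d, LinearMap.mulLeft k (𝐱 d) ∘ₗ LinearMap.proj d)

theorem foxCoeff_apply (g : Q.A) (m : (Q.V → k) × (Q.A → 𝒜)) :
    foxCoeff g m = m.1 (Q.tgt g) • 𝐞 (Q.tgt g) + ∑ d with Q.Nonrel g d, 𝐱 d * m.2 d := by
  simp [foxCoeff]

/-- Left multiplication by the idempotent `e_v` on formal expressions `∑ c_v e_v + ∑ g b_g`. -/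
noncomputable def foxIdem (v : Q.V) : Module.End k ((Q.V → k) × (Q.A → 𝒜)) :=
  (LinearMap.single k (fun _ => k) v ∘ₗ LinearMap.proj v).prodMap
    (LinearMap.pi fun g => if v = Q.src g then LinearMap.proj g else 0)

theorem foxIdem_apply (v : Q.V) (m : (Q.V → k) × (Q.A → 𝒜)) :
    foxIdem v m = (Pi.single v (m.1 v), fun g => if v = Q.src g then m.2 g else 0) := by
  refine Prod.ext rfl (funext fun g => ?_)
  by_cases h : v = Q.src g <;> simp [foxIdem, h]

/-- Left multiplication by the arrow `g` on formal expressions `∑ c_v e_v + ∑ g b_g`. -/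
noncomputable def foxArr (g : Q.A) : Module.End k ((Q.V → k) × (Q.A → 𝒜)) :=
  LinearMap.inr k _ _ ∘ₗ LinearMap.single k (fun _ => 𝒜) g ∘ₗ foxCoeff g

theorem foxArr_apply (g : Q.A) (m : (Q.V → k) × (Q.A → 𝒜)) :
    foxArr g m = (0, Pi.single g (foxCoeff g m)) :=
  rfl

theorem satisfiesRelations_fox : SatisfiesRelations Q (foxIdem (k := k)) foxArr where
  idem v := by
    refine LinearMap.ext fun m => ?_
    simp only [Module.End.mul_apply, foxIdem_apply, Pi.single_eq_same]
    ext <;> aesop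
  orth v w h := by
    refine LinearMap.ext fun m => ?_
    simp only [Module.End.mul_apply, foxIdem_apply]
    ext <;> aesop
  sum_idem := by
    refine LinearMap.ext fun m => Prod.ext ?_ ?_
    · simp [foxIdem_apply, Prod.fst_sum, Finset.univ_sum_single]
    · ext g
      simp [foxIdem_apply, Prod.snd_sum]
  src_mul g := by
    refine LinearMap.ext fun m => Prod.ext ?_ (funext fun d => ?_)
    · simp [foxIdem_apply, foxArr_apply]
    · by_cases hd : d = g
      · simp [foxIdem_apply, foxArr_apply, hd]
      · simp [foxIdem_apply, foxArr_apply, hd]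
  mul_tgt g := by
    refine LinearMap.ext fun m => ?_
    have hcoeff : foxCoeff g (foxIdem (Q.tgt g) m) = foxCoeff g m := by
      simp only [foxCoeff_apply, foxIdem_apply, Pi.single_eq_same]
      congr 1
      refine Finset.sum_congr rfl fun d hd => ?_
      rw [if_pos (Finset.mem_filter.1 hd).2.1]
    simp only [Module.End.mul_apply, foxArr_apply, hcoeff]
  relation g d h := by
    refine LinearMap.ext fun m => ?_
    have hcoeff : foxCoeff g (foxArr d m) = 0 := by
      simp only [foxCoeff_apply, foxArr_apply, Pi.zero_apply, zero_smul, zero_add]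
      refine Finset.sum_eq_zero fun b hb => ?_
      rw [Pi.single_eq_of_ne, mul_zero]
      rintro rfl
      exact (Finset.mem_filter.1 hb).2.2 h
    simp only [Module.End.mul_apply, foxArr_apply g, hcoeff, Pi.single_zero, LinearMap.zero_apply,
      Prod.mk_zero_zero]

/-- The action of `A` on formal expressions `∑ c_v e_v + ∑ g b_g` by left multiplication. -/
noncomputable def foxRep : 𝒜 →ₐ[k] Module.End k ((Q.V → k) × (Q.A → 𝒜)) :=
  lift satisfiesRelations_fox

/-- The `g`-th (left) Fox derivative `∂_g`, normalised by
`a = ∑ v, ε_v(a) e_v + ∑ g, g ∂_g(a)`. -/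
noncomputable def foxDeriv (g : Q.A) : 𝒜 →ₗ[k] 𝒜 :=
  LinearMap.proj g ∘ₗ LinearMap.snd k _ _ ∘ₗ LinearMap.applyₗ (1, 0) ∘ₗ foxRep.toLinearMap

/-- The value in `A` of a formal expression `∑ c_v e_v + ∑ g b_g`. -/
noncomputable def foxEval : (Q.V → k) × (Q.A → 𝒜) →ₗ[k] 𝒜 :=
  (∑ v, LinearMap.toSpanSingleton k 𝒜 (𝐞 v) ∘ₗ LinearMap.proj v).coprod
    (∑ g, LinearMap.mulLeft k (𝐱 g) ∘ₗ LinearMap.proj g)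

theorem foxEval_apply (m : (Q.V → k) × (Q.A → 𝒜)) :
    foxEval m = ∑ v, m.1 v • 𝐞 v + ∑ g, 𝐱 g * m.2 g := by
  simp [foxEval]

theorem foxEval_foxIdem (v : Q.V) (m : (Q.V → k) × (Q.A → 𝒜)) :
    foxEval (foxIdem v m) = 𝐞 v * foxEval m := by
  simp only [foxEval_apply, foxIdem_apply, mul_add, Finset.mul_sum, mul_smul_comm,
    idemOf_mul_idemOf, ← mul_assoc, idemOf_mul_arrOf]
  simp [Pi.single_apply, ite_smul]

theorem arrOf_mul_foxCoeff (g : Q.A) (m : (Q.V → k) × (Q.A → 𝒜)) :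
    𝐱 g * foxCoeff g m = 𝐱 g * foxEval m := by
  simp only [foxEval_apply, foxCoeff_apply, mul_add, Finset.mul_sum, mul_smul_comm,
    arrOf_mul_idemOf, ← mul_assoc, Finset.sum_filter]
  congr 1
  · simp
  · refine Finset.sum_congr rfl fun d _ => ?_
    split_ifs with h
    · rw [mul_assoc]
    · rw [arrOf_mul_arrOf_of_not_nonrel h, zero_mul, mul_zero]

theorem foxEval_foxArr (g : Q.A) (m : (Q.V → k) × (Q.A → 𝒜)) :
    foxEval (foxArr g m) = 𝐱 g * foxEval m := by
  rw [← arrOf_mul_foxCoeff, foxEval_apply, foxArr_apply]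
  simp [Pi.single_apply]

theorem foxRep_fst (a : 𝒜) (m : (Q.V → k) × (Q.A → 𝒜)) :
    (foxRep a m).1 = augmentation a * m.1 := by
  induction a using induction generalizing m with
  | algebraMap c => ext v; simp [Algebra.smul_def]
  | idem v => ext w; by_cases h : w = v <;> simp [foxRep, foxIdem_apply, h]
  | arr g => simp [foxRep, foxArr_apply]
  | mul a b ha hb => rw [map_mul, map_mul, Module.End.mul_apply, ha, hb, mul_assoc]
  | add a b ha hb => rw [map_add, map_add, LinearMap.add_apply, Prod.fst_add, ha, hb, add_mul]

theorem foxEval_foxRep (a : 𝒜) (m : (Q.V → k) × (Q.A → 𝒜)) :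
    foxEval (foxRep a m) = a * foxEval m := by
  induction a using induction generalizing m with
  | algebraMap c => rw [AlgHom.commutes, Module.algebraMap_end_apply, map_smul, Algebra.smul_def]
  | idem v => simp [foxRep, foxEval_foxIdem]
  | arr g => simp [foxRep, foxEval_foxArr]
  | mul a b ha hb => rw [map_mul, Module.End.mul_apply, ha, hb, mul_assoc]
  | add a b ha hb => rw [map_add, LinearMap.add_apply, map_add, ha, hb, add_mul]

theorem foxRep_one_zero (a : 𝒜) : foxRep a (1, 0) = (augmentation a, fun g => foxDeriv g a) :=
  Prod.ext (by simp [foxRep_fst]) rfl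

theorem eq_sum_augmentation_add_sum_foxDeriv (a : 𝒜) :
    a = ∑ v, augmentation a v • 𝐞 v + ∑ g, 𝐱 g * foxDeriv g a := by
  have h := foxEval_foxRep a (1, 0)
  rw [foxRep_one_zero, foxEval_apply, foxEval_apply] at h
  simpa [sum_idemOf] using h.symm

theorem eq_sum_foxDeriv {a : 𝒜} (ha : augmentation a = 0) : a = ∑ g, 𝐱 g * foxDeriv g a := by
  simpa [ha] using eq_sum_augmentation_add_sum_foxDeriv a

theorem foxDeriv_arrOf_mul_self (g : Q.A) (a : 𝒜) :
    foxDeriv g (𝐱 g * a) =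
      augmentation a (Q.tgt g) • 𝐞 (Q.tgt g) + ∑ d with Q.Nonrel g d, 𝐱 d * foxDeriv d a := by
  have h : foxRep (𝐱 g * a) (1, 0) = foxArr g (foxRep a (1, 0)) := by
    rw [map_mul, Module.End.mul_apply, foxRep, lift_arrOf]
  rw [foxRep_one_zero, foxRep_one_zero] at h
  simpa [foxArr_apply, foxCoeff_apply] using congrFun (congrArg Prod.snd h) g

theorem foxDeriv_arrOf_mul_of_ne {g h : Q.A} (hgh : h ≠ g) (a : 𝒜) :
    foxDeriv h (𝐱 g * a) = 0 := by
  have h' : foxRep (𝐱 g * a) (1, 0) = foxArr g (foxRep a (1, 0)) := by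
    rw [map_mul, Module.End.mul_apply, foxRep, lift_arrOf]
  rw [foxRep_one_zero, foxArr_apply] at h'
  simpa [hgh] using congrFun (congrArg Prod.snd h') h

theorem arrOf_mul_foxDeriv_arrOf_mul (g : Q.A) (a : 𝒜) :
    𝐱 g * foxDeriv g (𝐱 g * a) = 𝐱 g * a := by
  have h := arrOf_mul_foxCoeff g (foxRep a (1, 0))
  rw [foxEval_foxRep, foxRep_one_zero, foxCoeff_apply, ← foxDeriv_arrOf_mul_self] at h
  simpa [foxEval_apply, sum_idemOf] using h

theorem arrOf_mul_foxDeriv_sum (g : Q.A) (u : Q.A → 𝒜) :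
    𝐱 g * foxDeriv g (∑ h, 𝐱 h * u h) = 𝐱 g * u g := by
  rw [map_sum, Finset.sum_eq_single g (fun h _ hh => foxDeriv_arrOf_mul_of_ne hh.symm _) (by simp),
    arrOf_mul_foxDeriv_arrOf_mul]

theorem augmentation_foxDeriv_arrOf_mul (g : Q.A) (a : 𝒜) :
    augmentation (foxDeriv g (𝐱 g * a)) (Q.tgt g) = augmentation a (Q.tgt g) := by
  simp [foxDeriv_arrOf_mul_self]

theorem augmentation_foxDeriv_mul_arrOf (g : Q.A) (a : 𝒜) :
    augmentation (foxDeriv g (a * 𝐱 g)) (Q.tgt g) = augmentation a (Q.src g) := by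
  have hexp : a * 𝐱 g = augmentation a (Q.src g) • (𝐱 g * 1) +
      ∑ h, 𝐱 h * (foxDeriv h a * 𝐱 g) := by
    conv_lhs => rw [eq_sum_augmentation_add_sum_foxDeriv a]
    simp [add_mul, Finset.sum_mul, idemOf_mul_arrOf, mul_assoc]
  have hsum : foxDeriv g (∑ h, 𝐱 h * (foxDeriv h a * 𝐱 g)) =
      foxDeriv g (𝐱 g * (foxDeriv g a * 𝐱 g)) := by
    rw [map_sum]
    exact Finset.sum_eq_single g (fun h _ hh => foxDeriv_arrOf_mul_of_ne hh.symm _) (by simp)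
  rw [hexp, map_add, map_smul, hsum, map_add, map_smul, Pi.add_apply, Pi.smul_apply,
    augmentation_foxDeriv_arrOf_mul, augmentation_foxDeriv_arrOf_mul]
  simp

theorem augmentation_src_eq_zero_of_mul_arrOf {g : Q.A} {a : 𝒜} (h : a * 𝐱 g = 0) :
    augmentation a (Q.src g) = 0 := by
  rw [← augmentation_foxDeriv_mul_arrOf, h, map_zero, map_zero, Pi.zero_apply]

theorem augmentation_tgt_eq_of_arrOf_mul_eq {g : Q.A} {a b : 𝒜} (h : 𝐱 g * a = 𝐱 g * b) :
    augmentation a (Q.tgt g) = augmentation b (Q.tgt g) := by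
  rw [← augmentation_foxDeriv_arrOf_mul, h, augmentation_foxDeriv_arrOf_mul]

theorem augmentation_tgt_eq_zero_of_arrOf_mul {g : Q.A} {a : 𝒜} (h : 𝐱 g * a = 0) :
    augmentation a (Q.tgt g) = 0 := by
  simpa using augmentation_tgt_eq_of_arrOf_mul_eq (h.trans (mul_zero _).symm)

theorem idemOf_ne_zero (v : Q.V) : 𝐞 v ≠ 0 := fun h => by
  simpa [h] using (augmentation_idemOf (k := k) v).symm

theorem arrOf_ne_zero (g : Q.A) : 𝐱 g ≠ 0 := fun h => by
  have := augmentation_tgt_eq_zero_of_arrOf_mul (a := (1 : 𝒜)) (g := g) (by rw [h, zero_mul])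
  simp at this

theorem arrOf_mul_eq_zero_of_sum_eq_zero {u : Q.A → 𝒜} (h : ∑ g, 𝐱 g * u g = 0) (g : Q.A) :
    𝐱 g * u g = 0 := by
  rw [← arrOf_mul_foxDeriv_sum, h, map_zero, mul_zero]

theorem arrOf_mul_foxDeriv_eq_zero_of_nonrel {g d : Q.A} (hgd : Q.Nonrel g d) {a : 𝒜}
    (h : 𝐱 g * a = 0) : 𝐱 d * foxDeriv d a = 0 := by
  have hsum : ∑ d, 𝐱 d * (if Q.Nonrel g d then foxDeriv d a else 0) = 0 := by
    have := foxDeriv_arrOf_mul_self g a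
    rw [h, map_zero, augmentation_tgt_eq_zero_of_arrOf_mul h, zero_smul, zero_add] at this
    simp only [mul_ite, mul_zero, ← Finset.sum_filter, ← this]
  simpa [hgd] using arrOf_mul_eq_zero_of_sum_eq_zero hsum d

theorem exists_eq_sum_of_arrOf_mul_eq_zero {g : Q.A} {a : 𝒜} (hga : 𝐱 g * a = 0)
    (ha : 𝐞 (Q.tgt g) * a = a) :
    ∃ u : Q.A → 𝒜, (∀ d, ¬ Q.rel g d → u d = 0) ∧ a = ∑ d, 𝐱 d * u d := by
  classical
  have haug : augmentation a (Q.tgt g) = 0 := augmentation_tgt_eq_zero_of_arrOf_mul hga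
  have hexp : a = ∑ d, if Q.tgt g = Q.src d then 𝐱 d * foxDeriv d a else 0 := by
    conv_lhs => rw [← ha, eq_sum_augmentation_add_sum_foxDeriv a]
    simp [mul_add, Finset.mul_sum, idemOf_mul_idemOf, ← mul_assoc, idemOf_mul_arrOf, haug]
  refine ⟨fun d => if Q.tgt g = Q.src d ∧ Q.rel g d then foxDeriv d a else 0,
    fun d hd => if_neg fun h => hd h.2, hexp.trans (Finset.sum_congr rfl fun d _ => ?_)⟩
  by_cases hs : Q.tgt g = Q.src d <;> by_cases hr : Q.rel g d <;> simp only [hs, hr, if_true,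
    if_false, and_true, and_false, mul_zero]
  exact arrOf_mul_foxDeriv_eq_zero_of_nonrel ⟨hs, hr⟩ hga

theorem exists_eq_arrOf_mul_of_arrOf_mul_eq_zero (hR : Relator.RightUnique Q.rel) {g d : Q.A}
    (hgd : Q.rel g d) {a : 𝒜} (hga : 𝐱 g * a = 0) (ha : 𝐞 (Q.tgt g) * a = a) :
    ∃ u, a = 𝐱 d * u := by
  obtain ⟨u, hu, hau⟩ := exists_eq_sum_of_arrOf_mul_eq_zero hga ha
  refine ⟨u d, hau.trans (Finset.sum_eq_single d (fun d' _ hd' => ?_) (by simp))⟩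
  rw [hu d' fun h => hd' (hR h hgd), mul_zero]

end FoxDerivative

section Units

theorem exists_mul_sub_augmentation_eq_zero {a : 𝒜} (ha : ∀ v, augmentation a v ≠ 0) (z : 𝒜) :
    ∃ c : 𝒜, augmentation (z - c * a) = 0 := by
  refine ⟨∑ v, (augmentation z v / augmentation a v) • 𝐞 v, funext fun v => ?_⟩
  rw [map_sub, map_mul, augmentation_sum_smul_idemOf]
  simp [div_mul_cancel₀ _ (ha v)]

theorem exists_mul_eq_of_augmentation_ne_zero
    (hwf : WellFounded fun d g => Q.Nonrel g d) {a : 𝒜} (ha : ∀ v, augmentation a v ≠ 0) (z : 𝒜) :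
    ∃ c : 𝒜, c * a = z := by
  let J : Ideal 𝒜 := Ideal.span {a}
  have hmem {z : 𝒜} (y : 𝒜) (hz : ∀ c, augmentation (z - c * a) = 0 → y * (z - c * a) ∈ J) :
      y * z ∈ J := by
    obtain ⟨c, hc⟩ := exists_mul_sub_augmentation_eq_zero ha z
    have hca : y * (c * a) ∈ J :=
      J.mul_mem_left _ (J.mul_mem_left _ (Ideal.mem_span_singleton_self a))
    simpa [mul_sub] using J.add_mem (hz c hc) hca
  have harr (g : Q.A) : ∀ z, 𝐱 g * z ∈ J := by
    induction g using hwf.induction with | _ g ih => ?_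
    refine fun z => hmem _ fun c hc => ?_
    rw [eq_sum_foxDeriv hc, Finset.mul_sum]
    refine J.sum_mem fun d _ => ?_
    by_cases hgd : Q.Nonrel g d
    · exact J.mul_mem_left _ (ih d hgd _)
    · rw [← mul_assoc, arrOf_mul_arrOf_of_not_nonrel hgd, zero_mul]
      exact J.zero_mem
  have hz : 1 * z ∈ J := hmem 1 fun c hc => by
    rw [one_mul, eq_sum_foxDeriv hc]
    exact J.sum_mem fun d _ => harr d _
  simpa [J, Ideal.mem_span_singleton'] using hz

theorem isUnit_of_augmentation_ne_zero (hwf : WellFounded fun d g => Q.Nonrel g d) {a : 𝒜}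
    (ha : ∀ v, augmentation a v ≠ 0) : IsUnit a := by
  obtain ⟨c, hc⟩ := exists_mul_eq_of_augmentation_ne_zero hwf ha 1
  have hc' (v : Q.V) : augmentation c v ≠ 0 := fun h => by
    have := congrFun (congrArg augmentation hc) v
    simp [h] at this
  obtain ⟨b, hb⟩ := exists_mul_eq_of_augmentation_ne_zero hwf hc' 1
  exact ⟨⟨a, c, left_inv_eq_right_inv hb hc ▸ hb, hc⟩, rfl⟩

theorem exists_idemOf_mul_mul_eq (hwf : WellFounded fun d g => Q.Nonrel g d) {v : Q.V} {a : 𝒜}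
    (ha : augmentation a v ≠ 0) : ∃ b : 𝒜, 𝐞 v * a * b = 𝐞 v := by
  let u : 𝒜 := 𝐞 v * a * 𝐞 v + (1 - 𝐞 v)
  have hu (w : Q.V) : augmentation u w ≠ 0 := by
    by_cases h : w = v <;> simp [u, h, ha]
  obtain ⟨c, hc⟩ := (isUnit_of_augmentation_ne_zero hwf hu).exists_right_inv
  refine ⟨𝐞 v * c, ?_⟩
  have heu : 𝐞 v * u = 𝐞 v * a * 𝐞 v := by simp [u, mul_add, mul_sub, ← mul_assoc]
  rw [← mul_assoc, ← heu, mul_assoc, hc, mul_one]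

theorem exists_arrOf_mul_mul_eq (hwf : WellFounded fun d g => Q.Nonrel g d) {g : Q.A} {a : 𝒜}
    (ha : augmentation a (Q.tgt g) ≠ 0) : ∃ b : 𝒜, 𝐱 g * a * b = 𝐱 g := by
  obtain ⟨b, hb⟩ := exists_idemOf_mul_mul_eq hwf ha
  refine ⟨b, ?_⟩
  rw [← arrOf_mul_idemOf_tgt g, mul_assoc, mul_assoc, ← mul_assoc (𝐞 _), hb]

end Units

section Opposite

/-- The opposite bound quiver. -/
abbrev _root_.GentleData.op (Q : GentleData) : GentleData where
  V := Q.V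
  A := Q.A
  src := Q.tgt
  tgt := Q.src
  rel a b := Q.rel b a

theorem satisfiesRelations_op_idemOf_arrOf (Q : GentleData) :
    SatisfiesRelations Q.op (fun v => op (idemOf k Q v)) (fun g => op (arrOf k Q g)) where
  idem v := congrArg op (idemOf_mul_self (Q := Q) v)
  orth v w h := congrArg op ((idemOf_mul_idemOf (Q := Q) w v).trans (if_neg h.symm))
  sum_idem := (Finset.op_sum ..).symm.trans (congrArg op (sum_idemOf k Q))
  src_mul g := congrArg op (arrOf_mul_idemOf_tgt (Q := Q) g)
  mul_tgt g := congrArg op (idemOf_src_mul_arrOf (Q := Q) g)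
  relation _ _ h := congrArg op (arrOf_mul_arrOf_of_rel (Q := Q) h)

/-- The algebra of the opposite bound quiver is opposite to `kQ/I`. -/
noncomputable def opEquiv : 𝒜 ≃ₐ[k] (GentleAlgebra k Q.op)ᵐᵒᵖ :=
  let toOp : 𝒜 →ₐ[k] (GentleAlgebra k Q.op)ᵐᵒᵖ := lift (satisfiesRelations_op_idemOf_arrOf Q.op)
  let ofOp : GentleAlgebra k Q.op →ₐ[k] 𝒜ᵐᵒᵖ := lift (satisfiesRelations_op_idemOf_arrOf Q)
  AlgEquiv.ofAlgHom toOp (AlgHom.opComm ofOp)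
    (AlgHom.op.symm.injective <| algHom_ext (by simp [toOp, ofOp]) (by simp [toOp, ofOp]))
    (algHom_ext (by simp [toOp, ofOp]) (by simp [toOp, ofOp]))

@[simp]
theorem opEquiv_idemOf (v : Q.V) : opEquiv (𝐞 v) = op (idemOf k Q.op v) :=
  lift_idemOf _ v

@[simp]
theorem opEquiv_arrOf (g : Q.A) : opEquiv (𝐱 g) = op (arrOf k Q.op g) :=
  lift_arrOf _ g

theorem augmentation_unop_opEquiv (a : 𝒜) : augmentation (opEquiv a).unop = augmentation a := by
  induction a using induction with
  | algebraMap c => simp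
  | idem v => simp
  | arr g => simp
  | mul a b ha hb => rw [map_mul, unop_mul, map_mul, map_mul, ha, hb, mul_comm]
  | add a b ha hb => rw [map_add, unop_add, map_add, map_add, ha, hb]

theorem exists_eq_sum_mul_arrOf {a : 𝒜} (ha : augmentation a = 0) :
    ∃ u : Q.A → 𝒜, a = ∑ g, u g * 𝐱 g := by
  have h := eq_sum_foxDeriv ((augmentation_unop_opEquiv a).trans ha)
  refine ⟨fun g => opEquiv.symm (op (foxDeriv (Q := Q.op) g (opEquiv a).unop)),
    opEquiv.injective ?_⟩
  simpa using congrArg op h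

theorem mul_arrOf_eq_zero_of_sum_eq_zero {u : Q.A → 𝒜} (h : ∑ g, u g * 𝐱 g = 0) (g : Q.A) :
    u g * 𝐱 g = 0 := by
  have h' : ∑ g, arrOf k Q.op g * (opEquiv (u g)).unop = 0 := by
    simpa using congrArg (unop ∘ opEquiv) h
  apply opEquiv.injective
  simpa using congrArg op (arrOf_mul_eq_zero_of_sum_eq_zero h' g)

theorem exists_eq_sum_of_mul_arrOf_eq_zero {g : Q.A} {a : 𝒜} (hag : a * 𝐱 g = 0)
    (ha : a * 𝐞 (Q.src g) = a) :
    ∃ u : Q.A → 𝒜, (∀ b, ¬ Q.rel b g → u b = 0) ∧ a = ∑ b, u b * 𝐱 b := by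
  obtain ⟨u, hu, hsum⟩ := exists_eq_sum_of_arrOf_mul_eq_zero (Q := Q.op) (g := g)
    (a := (opEquiv a).unop) (by simpa using congrArg (unop ∘ opEquiv) hag)
    (by simpa using congrArg (unop ∘ opEquiv) ha)
  refine ⟨fun b => opEquiv.symm (op (u b)), fun b hb => by simp [hu b hb], opEquiv.injective ?_⟩
  simpa using congrArg op hsum

theorem exists_eq_mul_arrOf_of_mul_arrOf_eq_zero (hL : Relator.LeftUnique Q.rel) {b g : Q.A}
    (hbg : Q.rel b g) {a : 𝒜} (hag : a * 𝐱 g = 0) (ha : a * 𝐞 (Q.src g) = a) :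
    ∃ u, a = u * 𝐱 b := by
  obtain ⟨u, hu, hau⟩ := exists_eq_sum_of_mul_arrOf_eq_zero hag ha
  refine ⟨u b, hau.trans (Finset.sum_eq_single b (fun b' _ hb' => ?_) (by simp))⟩
  rw [hu b' fun h => hb' (hL h hbg), zero_mul]

end Opposite

section ArrowModule

theorem mem_arrowModule_iff {g : Q.A} {x : 𝒜} : x ∈ arrowModule k Q g ↔ ∃ a, 𝐱 g * a = x :=
  Submodule.mem_span_singleton.trans op_surjective.exists

theorem arrowModule_le_iff {g : Q.A} {N : Submodule 𝒜ᵐᵒᵖ 𝒜} :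
    arrowModule k Q g ≤ N ↔ 𝐱 g ∈ N :=
  Submodule.span_singleton_le_iff_mem _ _

theorem mem_vertexModule_iff {v : Q.V} {x : 𝒜} : x ∈ vertexModule k Q v ↔ 𝐞 v * x = x := by
  refine Submodule.mem_span_singleton.trans (op_surjective.exists.trans ⟨?_, fun h => ⟨x, h⟩⟩)
  rintro ⟨a, rfl⟩
  rw [op_smul_eq_mul, ← mul_assoc, idemOf_mul_self]

variable (k) in
/-- The arrow `g` as a generator of the module `gA`. -/
noncomputable def arrowGen (g : Q.A) : arrowModule k Q g :=
  ⟨𝐱 g, Submodule.mem_span_singleton_self _⟩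

theorem exists_op_smul_arrowGen {g : Q.A} (x : arrowModule k Q g) :
    ∃ a : 𝒜, op a • arrowGen k g = x := by
  obtain ⟨a, ha⟩ := mem_arrowModule_iff.1 x.2
  exact ⟨a, Subtype.ext ha⟩

theorem op_smul_arrowGen_of_rel {g d : Q.A} (h : Q.rel g d) : op (𝐱 d) • arrowGen k g = 0 :=
  Subtype.ext (arrOf_mul_arrOf_of_rel h)

theorem arrowGen_mem_of_op_smul_mem (hwf : WellFounded fun d g => Q.Nonrel g d) {g : Q.A}
    {N : Submodule 𝒜ᵐᵒᵖ (arrowModule k Q g)} {a : 𝒜} (haN : op a • arrowGen k g ∈ N)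
    (ha : augmentation a (Q.tgt g) ≠ 0) : arrowGen k g ∈ N := by
  obtain ⟨b, hb⟩ := exists_arrOf_mul_mul_eq hwf ha
  exact (Subtype.ext hb : op b • op a • arrowGen k g = arrowGen k g) ▸ N.smul_mem (op b) haN

theorem eq_top_of_arrowGen_mem {g : Q.A} {N : Submodule 𝒜ᵐᵒᵖ (arrowModule k Q g)}
    (h : arrowGen k g ∈ N) : N = ⊤ :=
  eq_top_iff.2 fun x _ => by
    obtain ⟨a, rfl⟩ := exists_op_smul_arrowGen x
    exact N.smul_mem _ h

theorem indecomposableModule_arrowModule (hwf : WellFounded fun d g => Q.Nonrel g d) (g : Q.A) :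
    IndecomposableModule 𝒜ᵐᵒᵖ (arrowModule k Q g) := by
  refine ⟨⟨arrowGen k g, 0, fun h => arrOf_ne_zero g (congrArg Subtype.val h)⟩, fun N N' hN => ?_⟩
  obtain ⟨y, y', hy, hy', hsum⟩ :=
    Submodule.codisjoint_iff_exists_add_eq.1 hN.codisjoint (arrowGen k g)
  obtain ⟨a, rfl⟩ := exists_op_smul_arrowGen y
  obtain ⟨a', rfl⟩ := exists_op_smul_arrowGen y'
  have haug : augmentation (a + a') (Q.tgt g) = augmentation (1 : 𝒜) (Q.tgt g) := by
    refine augmentation_tgt_eq_of_arrOf_mul_eq ?_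
    rw [mul_add, mul_one]
    exact congrArg Subtype.val hsum
  by_cases ha : augmentation a (Q.tgt g) = 0
  · have ha' : augmentation a' (Q.tgt g) ≠ 0 := fun h => by simp [ha, h] at haug
    exact .inl (disjoint_top.1
      (eq_top_of_arrowGen_mem (arrowGen_mem_of_op_smul_mem hwf hy' ha') ▸ hN.disjoint))
  · exact .inr (top_disjoint.1
      (eq_top_of_arrowGen_mem (arrowGen_mem_of_op_smul_mem hwf hy ha) ▸ hN.disjoint))

variable (k) in
/-- Left multiplication `A → gA` by the arrow `g`. -/
noncomputable def arrowCover (g : Q.A) : 𝒜 →ₗ[𝒜ᵐᵒᵖ] arrowModule k Q g :=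
  (LinearMap.mulLeft 𝒜ᵐᵒᵖ (𝐱 g)).codRestrict _ fun a => mem_arrowModule_iff.2 ⟨a, rfl⟩

theorem arrowCover_surjective (g : Q.A) : Function.Surjective (arrowCover k g) := fun x =>
  exists_op_smul_arrowGen x

theorem not_projective_arrowModule (hcomp : ∀ a b, Q.rel a b → Q.tgt a = Q.src b) {g d : Q.A}
    (hgd : Q.rel g d) : ¬ Module.Projective 𝒜ᵐᵒᵖ (arrowModule k Q g) := by
  intro hproj
  obtain ⟨s, hs⟩ := Module.projective_lifting_property (arrowCover k g) .id
    (arrowCover_surjective g)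
  have hgs : 𝐱 g * s (arrowGen k g) = 𝐱 g * 1 := by
    rw [mul_one]
    exact congrArg Subtype.val (LinearMap.congr_fun hs (arrowGen k g))
  have hsd : s (arrowGen k g) * 𝐱 d = 0 := by
    have h := map_smul s (op (𝐱 d)) (arrowGen k g)
    rwa [op_smul_arrowGen_of_rel hgd, map_zero, eq_comm] at h
  have h₁ := augmentation_tgt_eq_of_arrOf_mul_eq hgs
  have h₂ := augmentation_src_eq_zero_of_mul_arrOf hsd
  rw [← hcomp g d hgd] at h₂
  simp [h₂] at h₁

theorem augmentation_tgt_ne_zero_of_linearEquiv {g g' : Q.A} {a : 𝒜}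
    (e : arrowModule k Q g ≃ₗ[𝒜ᵐᵒᵖ] arrowModule k Q g')
    (ha : op a • arrowGen k g' = e (arrowGen k g)) :
    augmentation a (Q.tgt g) ≠ 0 := by
  obtain ⟨b, hb⟩ := exists_op_smul_arrowGen (e.symm (arrowGen k g'))
  have hba : 𝐱 g * (b * a) = 𝐱 g * 1 := by
    refine congrArg Subtype.val (?_ : op (b * a) • arrowGen k g = op (1 : 𝒜) • arrowGen k g)
    rw [op_mul, mul_smul, hb, ← map_smul, ha, e.symm_apply_apply, op_one, one_smul]
  intro h
  simpa [h] using augmentation_tgt_eq_of_arrOf_mul_eq hba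

theorem eq_of_arrowModule_linearEquiv (hcomp : ∀ a b, Q.rel a b → Q.tgt a = Q.src b)
    (hL : Relator.LeftUnique Q.rel) {g g' d : Q.A} (hgd : Q.rel g d)
    (e : arrowModule k Q g ≃ₗ[𝒜ᵐᵒᵖ] arrowModule k Q g') : g = g' := by
  obtain ⟨a, ha⟩ : ∃ a, op (𝐞 (Q.tgt g') * a) • arrowGen k g' = e (arrowGen k g) := by
    obtain ⟨a, ha⟩ := exists_op_smul_arrowGen (e (arrowGen k g))
    refine ⟨a, .trans (Subtype.ext ?_) ha⟩
    simp [arrowGen, ← mul_assoc]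
  set c := 𝐞 (Q.tgt g') * a
  have hc : augmentation c (Q.tgt g) ≠ 0 := augmentation_tgt_ne_zero_of_linearEquiv e ha
  have htgt : Q.tgt g' = Q.tgt g := by
    by_contra h
    simp [c, Ne.symm h] at hc
  have hcd : 𝐱 g' * (c * 𝐱 d) = 0 := by
    refine congrArg Subtype.val (?_ : op (c * 𝐱 d) • arrowGen k g' = 0)
    rw [op_mul, mul_smul, ha, ← map_smul, op_smul_arrowGen_of_rel hgd, map_zero]
  refine hL hgd (by_contra fun hrel => hc ?_)
  rw [hcomp g d hgd, ← augmentation_foxDeriv_mul_arrOf]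
  exact augmentation_tgt_eq_zero_of_arrOf_mul
    (arrOf_mul_foxDeriv_eq_zero_of_nonrel ⟨htgt.trans (hcomp g d hgd), hrel⟩ hcd)

end ArrowModule

/-! ### The complete resolution of `gA` -/

section GorensteinProjective

/-- The idempotent `e_v` as a generator of the module `e_v A`. -/
noncomputable def vertexGen (k : Type) [Field k] {Q : GentleData} (v : Q.V) : vertexModule k Q v :=
  ⟨idemOf k Q v, Submodule.mem_span_singleton_self _⟩

theorem op_smul_vertexGen {v : Q.V} (x : vertexModule k Q v) : op x.1 • vertexGen k v = x :=
  Subtype.ext (mem_vertexModule_iff.1 x.2)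

instance projective_vertexModule (v : Q.V) : Module.Projective 𝒜ᵐᵒᵖ (vertexModule k Q v) :=
  have : Module.Projective 𝒜ᵐᵒᵖ 𝒜 := .of_equiv (opLinearEquiv 𝒜ᵐᵒᵖ).symm
  .of_split (vertexModule k Q v).subtype (orbitHom (vertexGen k v))
    (LinearMap.ext op_smul_vertexGen)

variable (k) in
/-- Left multiplication `e_v A → e_w A` by an arrow `g` with source `w`. -/
noncomputable def arrowMul {v w : Q.V} (g : Q.A) (hw : Q.src g = w) :
    vertexModule k Q v →ₗ[𝒜ᵐᵒᵖ] vertexModule k Q w :=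
  (LinearMap.mulLeft 𝒜ᵐᵒᵖ (𝐱 g) ∘ₗ (vertexModule k Q v).subtype).codRestrict _ fun x => by
    subst hw
    rw [mem_vertexModule_iff]
    simp [← mul_assoc]

theorem coe_arrowMul {v w : Q.V} (g : Q.A) (hw : Q.src g = w) (x : vertexModule k Q v) :
    (arrowMul k g hw x : 𝒜) = 𝐱 g * x :=
  rfl

theorem arrowMul_arrowMul_of_rel {g d : Q.A} (hgd : Q.rel g d) {u v w : Q.V}
    (hd : Q.src d = v) (hg : Q.src g = w) (x : vertexModule k Q u) :
    arrowMul k g hg (arrowMul k d hd x) = 0 :=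
  Subtype.ext (by simp [coe_arrowMul, ← mul_assoc, arrOf_mul_arrOf_of_rel hgd])

theorem exact_arrowMul (hR : Relator.RightUnique Q.rel) {g d : Q.A} (hgd : Q.rel g d) {w : Q.V}
    (hd : Q.src d = Q.tgt g) (hg : Q.src g = w) :
    Function.Exact (arrowMul k (v := Q.tgt d) d hd) (arrowMul k g hg) := by
  refine fun x => ⟨fun hx => ?_, ?_⟩
  · obtain ⟨u, hxu⟩ := exists_eq_arrOf_mul_of_arrOf_mul_eq_zero hR hgd (congrArg Subtype.val hx)
      (mem_vertexModule_iff.1 x.2)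
    refine ⟨⟨𝐞 (Q.tgt d) * u, mem_vertexModule_iff.2 (by simp [← mul_assoc])⟩, Subtype.ext ?_⟩
    rw [coe_arrowMul, ← mul_assoc, arrOf_mul_idemOf_tgt]
    exact hxu.symm
  · rintro ⟨y, rfl⟩
    exact arrowMul_arrowMul_of_rel hgd _ _ y

theorem exact_comp_arrowMul (hL : Relator.LeftUnique Q.rel) {g d : Q.A} (hgd : Q.rel g d) {w : Q.V}
    (hd : Q.src d = Q.tgt g) (hg : Q.src g = w) :
    Function.Exact (fun f : vertexModule k Q w →ₗ[𝒜ᵐᵒᵖ] 𝒜ᵐᵒᵖ => f ∘ₗ arrowMul k g hg)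
      (fun f : vertexModule k Q (Q.tgt g) →ₗ[𝒜ᵐᵒᵖ] 𝒜ᵐᵒᵖ =>
        f ∘ₗ arrowMul k (v := Q.tgt d) d hd) := by
  refine fun f => ⟨fun hf => ?_, ?_⟩
  · set c := (f (vertexGen k (Q.tgt g))).unop
    have hf_apply (x : vertexModule k Q (Q.tgt g)) : f x = op (c * x) := by
      conv_lhs => rw [← op_smul_vertexGen x, map_smul]
      exact unop_injective rfl
    have hcd : c * 𝐱 d = 0 := by
      have h : op (c * (𝐱 d * 𝐞 (Q.tgt d))) = 0 :=
        (hf_apply _).symm.trans (LinearMap.congr_fun hf (vertexGen k (Q.tgt d)))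
      rw [arrOf_mul_idemOf_tgt] at h
      exact op_injective h
    have hce : c * 𝐞 (Q.src d) = c := by
      rw [hd]
      exact congrArg unop (hf_apply (vertexGen k _)).symm
    obtain ⟨u, hcu⟩ := exists_eq_mul_arrOf_of_mul_arrOf_eq_zero hL hgd hcd hce
    refine ⟨(opLinearEquiv 𝒜ᵐᵒᵖ).toLinearMap ∘ₗ LinearMap.mulLeft 𝒜ᵐᵒᵖ u ∘ₗ
      (vertexModule k Q w).subtype, LinearMap.ext fun x => ?_⟩
    rw [hf_apply, hcu]
    exact congrArg op (mul_assoc ..).symm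
  · rintro ⟨f, rfl⟩
    exact LinearMap.ext fun y =>
      (congrArg f (arrowMul_arrowMul_of_rel hgd hd hg y)).trans (map_zero f)

theorem map_subtype_range_arrowMul {w : Q.V} (g : Q.A) (hg : Q.src g = w) :
    (LinearMap.range (arrowMul k (v := Q.tgt g) g hg)).map (vertexModule k Q w).subtype =
      arrowModule k Q g := by
  refine le_antisymm ?_ (arrowModule_le_iff.2
    ⟨_, ⟨vertexGen k (Q.tgt g), rfl⟩, arrOf_mul_idemOf_tgt g⟩)
  rintro _ ⟨_, ⟨x, rfl⟩, rfl⟩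
  exact mem_arrowModule_iff.2 ⟨x, rfl⟩

theorem isGorensteinProjective_arrowModule (hcomp : ∀ a b, Q.rel a b → Q.tgt a = Q.src b)
    (hL : Relator.LeftUnique Q.rel) (hR : Relator.RightUnique Q.rel) {g : Q.A}
    (hg : OnOCFCycle Q g) : IsGorensteinProjective 𝒜ᵐᵒᵖ (arrowModule k Q g) := by
  obtain ⟨q, hq0, hq⟩ := hg.exists_rel_sequence
  have hsrc (n : ℤ) : Q.src (q (n + 1)) = Q.tgt (q (n + 1 + 1)) := (hcomp _ _ (hq (n + 1))).symm
  refine ⟨fun n => .of 𝒜ᵐᵒᵖ (vertexModule k Q (Q.tgt (q (n + 1)))),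
    fun n => arrowMul k (q (n + 1)) (hsrc n), fun n => projective_vertexModule _,
    fun n => exact_arrowMul hR (hq (n + 1)) _ _, fun n => exact_comp_arrowMul hL (hq _) _ _, ⟨?_⟩⟩
  obtain rfl : q (-1 + 1) = g := hq0
  exact (LinearEquiv.ofEq _ _ (map_subtype_range_arrowMul _ (hsrc (-1))).symm).trans
    (Submodule.equivMapOfInjective _ (Submodule.subtype_injective _) _).symm

end GorensteinProjective

/-! ### Kernels in complete resolutions -/

section Classification

theorem arrOf_mul_eq_of_nonrel {g d : Q.A} (hN : Relator.RightUnique Q.Nonrel) (hgd : Q.Nonrel g d)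
    {a : 𝒜} (ha : augmentation a (Q.tgt g) = 0) : 𝐱 g * a = 𝐱 g * (𝐱 d * foxDeriv d a) := by
  have hfilter : ({d' | Q.Nonrel g d'} : Finset Q.A) = {d} := by
    ext d'
    simpa using ⟨fun h => hN h hgd, fun h => h ▸ hgd⟩
  rw [← arrOf_mul_foxDeriv_arrOf_mul, foxDeriv_arrOf_mul_self, ha, zero_smul, zero_add, hfilter,
    Finset.sum_singleton]

theorem arrOf_mul_eq_zero_of_forall_not_nonrel {g : Q.A} (hg : ∀ d, ¬ Q.Nonrel g d) {a : 𝒜}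
    (ha : augmentation a (Q.tgt g) = 0) : 𝐱 g * a = 0 := by
  rw [← arrOf_mul_foxDeriv_arrOf_mul, foxDeriv_arrOf_mul_self, ha, zero_smul, zero_add]
  simp [hg]

theorem injOn_arrOf_mul_of_nonrel {g d : Q.A} (hgd : Q.Nonrel g d) :
    Set.InjOn (LinearMap.mulLeft 𝒜ᵐᵒᵖ (𝐱 g)) (arrowModule k Q d) := by
  refine LinearMap.injOn_of_disjoint_ker le_rfl (Submodule.disjoint_def.2 fun x hx hgx => ?_)
  obtain ⟨a, rfl⟩ := mem_arrowModule_iff.1 hx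
  rw [← arrOf_mul_foxDeriv_arrOf_mul]
  exact arrOf_mul_foxDeriv_eq_zero_of_nonrel hgd hgx

theorem exists_linearEquiv_of_le_arrowModule (hN : Relator.RightUnique Q.Nonrel)
    (hwf : WellFounded fun d g => Q.Nonrel g d) {g : Q.A} {N : Submodule 𝒜ᵐᵒᵖ 𝒜} (hN₀ : N ≠ ⊥)
    (hNg : N ≤ arrowModule k Q g) : ∃ g', Nonempty (N ≃ₗ[𝒜ᵐᵒᵖ] arrowModule k Q g') := by
  induction g using hwf.induction generalizing N with | _ g ih => ?_
  by_cases htop : ∃ a, 𝐱 g * a ∈ N ∧ augmentation a (Q.tgt g) ≠ 0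
  · obtain ⟨a, haN, ha⟩ := htop
    obtain ⟨b, hb⟩ := exists_arrOf_mul_mul_eq hwf ha
    exact ⟨g, ⟨.ofEq _ _ (hNg.antisymm (arrowModule_le_iff.2 (hb ▸ N.smul_mem (op b) haN)))⟩⟩
  have haug {a : 𝒜} (h : 𝐱 g * a ∈ N) : augmentation a (Q.tgt g) = 0 :=
    by_contra fun ha => htop ⟨a, h, ha⟩
  obtain ⟨d, hgd⟩ : ∃ d, Q.Nonrel g d := by
    by_contra! hg
    refine hN₀ ((Submodule.eq_bot_iff N).2 fun x hx => ?_)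
    obtain ⟨a, rfl⟩ := mem_arrowModule_iff.1 (hNg hx)
    exact arrOf_mul_eq_zero_of_forall_not_nonrel hg (haug hx)
  let N' : Submodule 𝒜ᵐᵒᵖ 𝒜 := N.comap (LinearMap.mulLeft 𝒜ᵐᵒᵖ (𝐱 g)) ⊓ arrowModule k Q d
  have hmap : N'.map (LinearMap.mulLeft 𝒜ᵐᵒᵖ (𝐱 g)) = N := by
    refine le_antisymm (Submodule.map_le_iff_le_comap.2 inf_le_left) fun x hx => ?_
    obtain ⟨a, rfl⟩ := mem_arrowModule_iff.1 (hNg hx)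
    have hga := arrOf_mul_eq_of_nonrel hN hgd (haug hx)
    exact ⟨_, ⟨show 𝐱 g * _ ∈ N from hga ▸ hx, mem_arrowModule_iff.2 ⟨_, rfl⟩⟩, hga.symm⟩
  have hN'₀ : N' ≠ ⊥ := fun h => hN₀ (by rw [← hmap, h, Submodule.map_bot])
  have hinj : Function.Injective ((LinearMap.mulLeft 𝒜ᵐᵒᵖ (𝐱 g)).domRestrict N') :=
    ((injOn_arrOf_mul_of_nonrel hgd).mono inf_le_right).injective
  obtain ⟨g', ⟨e⟩⟩ := ih d hgd hN'₀ inf_le_right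
  exact ⟨g', ⟨(LinearEquiv.ofEq _ _ ((LinearMap.range_domRestrict ..).trans hmap)).symm
    ≪≫ₗ (LinearEquiv.ofInjective _ hinj).symm ≪≫ₗ e⟩⟩

variable {K : Type} [AddCommGroup K] [Module (GentleAlgebra k Q)ᵐᵒᵖ K]

theorem augmentation_functional_eq_zero (hwf : WellFounded fun d g => Q.Nonrel g d)
    (hK : IndecomposableModule 𝒜ᵐᵒᵖ K) (hproj : ¬ Module.Projective 𝒜ᵐᵒᵖ K) (f : K →ₗ[𝒜ᵐᵒᵖ] 𝒜)
    (x : K) : augmentation (f x) = 0 := by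
  refine funext fun v => by_contra fun hv => hproj ?_
  obtain ⟨b, hb⟩ := exists_idemOf_mul_mul_eq hwf hv
  let toVertex : K →ₗ[𝒜ᵐᵒᵖ] vertexModule k Q v :=
    (LinearMap.mulLeft 𝒜ᵐᵒᵖ (𝐞 v) ∘ₗ f).codRestrict _ fun y =>
      mem_vertexModule_iff.2 (by simp [← mul_assoc])
  let ofVertex : vertexModule k Q v →ₗ[𝒜ᵐᵒᵖ] K :=
    orbitHom (op b • x) ∘ₗ (vertexModule k Q v).subtype
  have hid : toVertex ∘ₗ ofVertex = .id := by
    refine LinearMap.ext fun y => Subtype.ext ?_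
    have hy : f (op y.1 • op b • x) = f x * b * y :=
      (map_op_smul f y.1 _).trans (congrArg (· * y.1) (map_op_smul f b x))
    calc 𝐞 v * f (op y.1 • op b • x) = 𝐞 v * f x * b * y := by simp [hy, mul_assoc]
      _ = y := by rw [hb, mem_vertexModule_iff.1 y.2]
  have : Nontrivial (vertexModule k Q v) :=
    ⟨vertexGen k v, 0, fun h => idemOf_ne_zero v (congrArg Subtype.val h)⟩
  have hbij := hK.bijective_of_comp_eq_id (N := vertexModule k Q v) hid
  exact .of_equiv (LinearEquiv.ofBijective toVertex hbij).symm

theorem exists_arrowComponent {f : K →ₗ[𝒜ᵐᵒᵖ] 𝒜} (hf : ∀ x, augmentation (f x) = 0) (g : Q.A) :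
    ∃ F : K →ₗ[𝒜ᵐᵒᵖ] 𝒜, ∀ x, F x = 𝐱 g * foxDeriv g (f x) := by
  refine ⟨⟨⟨fun x => 𝐱 g * foxDeriv g (f x), fun x y => ?_⟩, fun a x => ?_⟩, fun x => rfl⟩
  · rw [map_add, map_add, mul_add]
  · have hfx : f (a • x) = ∑ d, 𝐱 d * (foxDeriv d (f x) * a.unop) := by
      calc f (a • x) = f x * a.unop := map_op_smul f a.unop x
        _ = (∑ d, 𝐱 d * foxDeriv d (f x)) * a.unop := by rw [← eq_sum_foxDeriv (hf x)]
        _ = _ := by simp only [Finset.sum_mul, mul_assoc]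
    change 𝐱 g * foxDeriv g (f (a • x)) = 𝐱 g * foxDeriv g (f x) * a.unop
    rw [hfx, arrOf_mul_foxDeriv_sum, mul_assoc]

theorem exists_surjective_arrowModule (hN : Relator.RightUnique Q.Nonrel)
    (hwf : WellFounded fun d g => Q.Nonrel g d) {f : K →ₗ[𝒜ᵐᵒᵖ] 𝒜}
    (hf : ∀ x, augmentation (f x) = 0) (hf₀ : f ≠ 0) :
    ∃ g, ∃ ψ : K →ₗ[𝒜ᵐᵒᵖ] arrowModule k Q g, Function.Surjective ψ := by
  obtain ⟨x, hx⟩ : ∃ x, f x ≠ 0 := by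
    by_contra! h
    exact hf₀ (LinearMap.ext h)
  obtain ⟨g, hg⟩ : ∃ g, 𝐱 g * foxDeriv g (f x) ≠ 0 := by
    by_contra! h
    exact hx (by rw [eq_sum_foxDeriv (hf x), Finset.sum_eq_zero fun g _ => h g])
  obtain ⟨F, hF⟩ := exists_arrowComponent hf g
  obtain ⟨g', ⟨e⟩⟩ := exists_linearEquiv_of_le_arrowModule hN hwf (g := g) (N := LinearMap.range F)
    (fun h => hg (hF x ▸ LinearMap.congr_fun (LinearMap.range_eq_bot.1 h) x))
    (by rintro _ ⟨y, rfl⟩; exact mem_arrowModule_iff.2 ⟨_, (hF y).symm⟩)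
  exact ⟨g', e.toLinearMap ∘ₗ F.rangeRestrict, e.surjective.comp F.surjective_rangeRestrict⟩

section Resolution

variable {P P' P'' : Type} [AddCommGroup P] [Module (GentleAlgebra k Q)ᵐᵒᵖ P] [AddCommGroup P']
  [Module (GentleAlgebra k Q)ᵐᵒᵖ P'] [AddCommGroup P''] [Module (GentleAlgebra k Q)ᵐᵒᵖ P'']

theorem op_smul_eq_zero_of_sum_op_smul_eq_zero [Module.Projective 𝒜ᵐᵒᵖ P'] {z : Q.A → P'}
    (h : ∑ d, op (𝐱 d) • z d = 0) (g : Q.A) : op (𝐱 g) • z g = 0 := by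
  by_contra hg
  obtain ⟨f, hf⟩ := exists_functional_ne_zero (B := 𝒜) hg
  have hsum : ∑ d, f (z d) * 𝐱 d = 0 := by
    calc ∑ d, f (z d) * 𝐱 d = f (∑ d, op (𝐱 d) • z d) := by
          rw [map_sum]
          exact Finset.sum_congr rfl fun d _ => (map_op_smul f (𝐱 d) (z d)).symm
      _ = 0 := by rw [h, map_zero]
  exact hf ((map_op_smul f (𝐱 g) (z g)).trans (mul_arrOf_eq_zero_of_sum_eq_zero hsum g))

theorem exists_op_smul_mem_ker [Module.Projective 𝒜ᵐᵒᵖ P] [Module.Projective 𝒜ᵐᵒᵖ P']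
    {D : P →ₗ[𝒜ᵐᵒᵖ] P'} {x : P} (hx : x ∈ LinearMap.ker D)
    (haug : ∀ f : P →ₗ[𝒜ᵐᵒᵖ] 𝒜, augmentation (f x) = 0) {F : P →ₗ[𝒜ᵐᵒᵖ] 𝒜} {g : Q.A}
    (hF : F x = 𝐱 g) : ∃ z : P, op (𝐱 g) • z ∈ LinearMap.ker D ∧ F z * 𝐱 g = 𝐱 g := by
  classical
  obtain ⟨z, rfl⟩ := eq_sum_op_smul_of_forall_functional (arrOf k Q) fun f =>
    exists_eq_sum_mul_arrOf (haug f)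
  have hD : ∑ d, op (𝐱 d) • D (z d) = 0 := by
    simpa only [map_sum, map_smul] using LinearMap.mem_ker.1 hx
  have hFz : ∑ d, F (z d) * 𝐱 d = 𝐱 g := by
    rw [← hF, map_sum]
    exact Finset.sum_congr rfl fun d _ => (map_op_smul F (𝐱 d) (z d)).symm
  have hsub : ∑ d, (F (z d) - if d = g then 1 else 0) * 𝐱 d = 0 := by
    simp [sub_mul, hFz]
  refine ⟨z g, LinearMap.mem_ker.2 ?_, ?_⟩
  · rw [map_smul, op_smul_eq_zero_of_sum_op_smul_eq_zero hD]
  · simpa [sub_mul, sub_eq_zero] using mul_arrOf_eq_zero_of_sum_eq_zero hsub g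

theorem exists_arrowModule_section {N : Submodule 𝒜ᵐᵒᵖ P} {g : Q.A}
    {ψ : N →ₗ[𝒜ᵐᵒᵖ] arrowModule k Q g} {F : P →ₗ[𝒜ᵐᵒᵖ] 𝒜} (hF : ∀ x : N, F x = ψ x) {z : P}
    (hz : op (𝐱 g) • z ∈ N) (hFz : F z * 𝐱 g = 𝐱 g) :
    ∃ β : arrowModule k Q g →ₗ[𝒜ᵐᵒᵖ] N, ψ ∘ₗ β = .id := by
  have hmem (y : arrowModule k Q g) : orbitHom z y.1 ∈ N := by
    obtain ⟨a, ha⟩ := mem_arrowModule_iff.1 y.2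
    rw [orbitHom_apply, ← ha, op_mul, mul_smul]
    exact N.smul_mem _ hz
  refine ⟨(orbitHom z ∘ₗ (arrowModule k Q g).subtype).codRestrict N hmem,
    LinearMap.ext fun y => Subtype.ext ((hF _).symm.trans ?_)⟩
  obtain ⟨a, ha⟩ := mem_arrowModule_iff.1 y.2
  calc F (op y.1 • z) = F z * y := map_op_smul F y.1 z
    _ = y := by rw [← ha, ← mul_assoc, hFz]

theorem exists_linearEquiv_arrowModule_ker [Module.Projective 𝒜ᵐᵒᵖ P] [Module.Projective 𝒜ᵐᵒᵖ P']
    (hN : Relator.RightUnique Q.Nonrel) (hwf : WellFounded fun d g => Q.Nonrel g d)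
    {D : P →ₗ[𝒜ᵐᵒᵖ] P'} (hK : IndecomposableModule 𝒜ᵐᵒᵖ (LinearMap.ker D))
    (hproj : ¬ Module.Projective 𝒜ᵐᵒᵖ (LinearMap.ker D))
    (hext : FunctionalsExtend (LinearMap.ker D)) :
    ∃ g, Nonempty (LinearMap.ker D ≃ₗ[𝒜ᵐᵒᵖ] arrowModule k Q g) ∧
      ¬ IsPureAt (LinearMap.ker D) (𝐱 g) := by
  have haug (f : P →ₗ[𝒜ᵐᵒᵖ] 𝒜) (x : LinearMap.ker D) : augmentation (f x) = 0 :=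
    augmentation_functional_eq_zero hwf hK hproj (f ∘ₗ (LinearMap.ker D).subtype) x
  have := hK.1
  obtain ⟨x₀, hx₀⟩ := exists_ne (0 : LinearMap.ker D)
  obtain ⟨f, hf⟩ := exists_functional_ne_zero (B := 𝒜) (x := (x₀ : P)) (by simpa using hx₀)
  obtain ⟨g, ψ, hψ⟩ := exists_surjective_arrowModule hN hwf
    (f := f ∘ₗ (LinearMap.ker D).subtype) (haug f) fun h => hf (LinearMap.congr_fun h x₀)
  obtain ⟨F, hF⟩ := hext ((arrowModule k Q g).subtype ∘ₗ ψ)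
  obtain ⟨x, hx⟩ := hψ (arrowGen k g)
  obtain ⟨z, hz, hFz⟩ := exists_op_smul_mem_ker x.2 (haug · x) (F := F) (g := g)
    ((LinearMap.congr_fun hF x).trans (congrArg Subtype.val hx))
  obtain ⟨β, hβ⟩ := exists_arrowModule_section (LinearMap.congr_fun hF) hz hFz
  have := (indecomposableModule_arrowModule (k := k) hwf g).1
  refine ⟨g, ⟨.ofBijective ψ (hK.bijective_of_comp_eq_id (N := arrowModule k Q g) hβ)⟩,
    fun hpure => ?_⟩
  obtain ⟨z', hz', hzz'⟩ := hpure z hz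
  have hFz' : F z' * 𝐱 g = 𝐱 g := by
    calc F z' * 𝐱 g = F (op (𝐱 g) • z') := (map_op_smul F (𝐱 g) z').symm
      _ = F z * 𝐱 g := by rw [hzz']; exact map_op_smul F (𝐱 g) z
      _ = 𝐱 g := hFz
  have h := augmentation_src_eq_zero_of_mul_arrOf (g := g) (a := F z' - 1) (by simp [sub_mul, hFz'])
  simp [haug F ⟨z', hz'⟩] at h

theorem exists_eq_op_smul_of_op_smul_eq_zero [Module.Projective 𝒜ᵐᵒᵖ P']
    (hL : Relator.LeftUnique Q.rel) {b g : Q.A} (hbg : Q.rel b g) {w : P'}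
    (hgw : op (𝐱 g) • w = 0) (hw : op (𝐞 (Q.src g)) • w = w) : ∃ w', w = op (𝐱 b) • w' := by
  refine exists_eq_op_smul_of_forall_functional fun f =>
    exists_eq_mul_arrOf_of_mul_arrOf_eq_zero hL hbg ?_ ?_
  · exact (map_op_smul f (𝐱 g) w).symm.trans (by rw [hgw, map_zero])
  · exact (map_op_smul f (𝐞 (Q.src g)) w).symm.trans (by rw [hw])

theorem eq_zero_of_op_smul_eq_zero [Module.Projective 𝒜ᵐᵒᵖ P'] {g : Q.A} (hg : ∀ b, ¬ Q.rel b g)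
    {w : P'} (hgw : op (𝐱 g) • w = 0) (hw : op (𝐞 (Q.src g)) • w = w) : w = 0 := by
  by_contra hw₀
  obtain ⟨f, hf⟩ := exists_functional_ne_zero (B := 𝒜) hw₀
  obtain ⟨u, hu, hfw⟩ := exists_eq_sum_of_mul_arrOf_eq_zero (g := g) (a := f w)
    ((map_op_smul f (𝐱 g) w).symm.trans (by rw [hgw, map_zero]))
    ((map_op_smul f (𝐞 (Q.src g)) w).symm.trans (by rw [hw]))
  exact hf (hfw.trans (Finset.sum_eq_zero fun b _ => by rw [hu b (hg b), zero_mul]))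

theorem exists_rel_not_isPureAt [Module.Projective 𝒜ᵐᵒᵖ P'] (hL : Relator.LeftUnique Q.rel)
    {D : P →ₗ[𝒜ᵐᵒᵖ] P'} {D' : P' →ₗ[𝒜ᵐᵒᵖ] P''} (hD : Function.Exact D D') {g : Q.A}
    (hg : ¬ IsPureAt (LinearMap.ker D) (𝐱 g)) :
    ∃ b, Q.rel b g ∧ ¬ IsPureAt (LinearMap.ker D') (𝐱 b) := by
  by_contra! hpure
  refine hg fun z hz => ?_
  obtain ⟨z₀, hez₀, hz₀⟩ : ∃ z₀, op (𝐞 (Q.src g)) • z₀ = z₀ ∧ op (𝐱 g) • z₀ = op (𝐱 g) • z := by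
    refine ⟨op (𝐞 (Q.src g)) • z, ?_, ?_⟩
    · rw [← mul_smul, ← op_mul, idemOf_mul_self]
    · rw [← mul_smul, ← op_mul, idemOf_src_mul_arrOf]
  have hgw : op (𝐱 g) • D z₀ = 0 := by
    rw [← map_smul, hz₀, LinearMap.mem_ker.1 hz]
  have hw : op (𝐞 (Q.src g)) • D z₀ = D z₀ := by
    rw [← map_smul, hez₀]
  by_cases hb : ∃ b, Q.rel b g
  · obtain ⟨b, hb⟩ := hb
    obtain ⟨w, hw⟩ := exists_eq_op_smul_of_op_smul_eq_zero hL hb hgw hw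
    obtain ⟨_, hw', hww'⟩ := hpure b hb w (hw ▸ hD.apply_apply_eq_zero z₀)
    obtain ⟨y, rfl⟩ := (hD _).1 hw'
    refine ⟨z₀ - op (𝐱 b) • y, ?_, ?_⟩
    · rw [LinearMap.mem_ker, map_sub, map_smul, hw, hww', sub_self]
    · rw [smul_sub, hz₀, ← mul_smul, ← op_mul, arrOf_mul_arrOf_of_rel hb, op_zero, zero_smul,
        sub_zero]
  · exact ⟨z₀, eq_zero_of_op_smul_eq_zero (not_exists.1 hb) hgw hw, hz₀⟩

end Resolution

theorem exists_onOCFCycle_linearEquiv (hQ : IsRightGentle Q) (hK : IsIndecNonProjGP 𝒜ᵐᵒᵖ K) :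
    ∃ g, OnOCFCycle Q g ∧ Nonempty (K ≃ₗ[𝒜ᵐᵒᵖ] arrowModule k Q g) := by
  obtain ⟨hindec, hGP, hproj⟩ := hK
  obtain ⟨P, d, hP, hd, hext, ⟨e⟩⟩ := hGP.exists_acyclic
  obtain ⟨g, ⟨e'⟩, hg⟩ := exists_linearEquiv_arrowModule_ker hQ.nonrel_rightUnique
    hQ.nonrel_wellFounded (hindec.of_linearEquiv e) (fun _ => hproj (.of_equiv e.symm)) (hext 0)
  refine ⟨g, ?_, ⟨e ≪≫ₗ e'⟩⟩
  refine OnOCFCycle.of_predecessor_closed hQ.composable hQ.rel_rightUnique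
    (S := {γ | ∃ n, ¬ IsPureAt (LinearMap.ker (d n)) (𝐱 γ)}) (fun γ ⟨n, hn⟩ => ?_) ⟨0, hg⟩
  obtain ⟨b, hb, hbn⟩ := exists_rel_not_isPureAt hQ.rel_leftUnique (hd n) hn
  exact ⟨b, ⟨n + 1, hbn⟩, hb⟩

end Classification

section Counting

variable (k : Type) [Field k] {Q : GentleData}

theorem isIndecNonProjGP_arrowModule (hQ : IsRightGentle Q) {g : Q.A} (hg : OnOCFCycle Q g) :
    IsIndecNonProjGP (GentleAlgebra k Q)ᵐᵒᵖ (arrowModule k Q g) :=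
  have ⟨_, hgd⟩ := hg.exists_rel
  ⟨indecomposableModule_arrowModule hQ.nonrel_wellFounded g,
    isGorensteinProjective_arrowModule hQ.composable hQ.rel_leftUnique hQ.rel_rightUnique hg,
    not_projective_arrowModule hQ.composable hgd⟩

/-- The isomorphism class of `gA`, for an arrow `g` on an oriented cycle with full relations. -/
noncomputable def arrowModuleClass (hQ : IsRightGentle Q) (g : {g : Q.A | OnOCFCycle Q g}) :
    Quotient (npgpSetoid k Q) :=
  ⟦⟨arrowModule k Q g, isIndecNonProjGP_arrowModule k hQ g.2⟩⟧

theorem arrowModuleClass_injective (hQ : IsRightGentle Q) :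
    Function.Injective (arrowModuleClass k hQ) := fun g _ h =>
  have ⟨e⟩ := Quotient.exact h
  have ⟨_, hgd⟩ := g.2.exists_rel
  Subtype.ext (eq_of_arrowModule_linearEquiv hQ.composable hQ.rel_leftUnique hgd e)

theorem arrowModuleClass_surjective (hQ : IsRightGentle Q) :
    Function.Surjective (arrowModuleClass k hQ) := fun x => by
  obtain ⟨N, rfl⟩ := Quotient.exists_rep x
  obtain ⟨g, hg, ⟨e⟩⟩ := exists_onOCFCycle_linearEquiv hQ N.2
  exact ⟨⟨g, hg⟩, Quotient.sound ⟨e.symm⟩⟩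

end Counting

end GentleAlgebra

theorem numIndecNonProjGP_eq_card_ocf_arrows_general
    (k : Type) [Field k] (Q : GentleData) (hQ : IsRightGentle Q) :
    numIndecNonProjGP k Q = Set.ncard {a : Q.A | OnOCFCycle Q a} ∧
    numIndecNonProjGP k Q =
      ∑ ℓ ∈ Finset.range (Fintype.card Q.A + 1), ℓ * AGzero Q ℓ := by
  have hcard : numIndecNonProjGP k Q = Set.ncard {a : Q.A | OnOCFCycle Q a} :=
    (Nat.card_congr (.ofBijective (GentleAlgebra.arrowModuleClass k hQ)
      ⟨GentleAlgebra.arrowModuleClass_injective k hQ,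
        GentleAlgebra.arrowModuleClass_surjective k hQ⟩)).symm
  exact ⟨hcard, hcard.trans (ncard_onOCFCycle hQ.composable hQ.rel_rightUnique)⟩

/-- The number of isomorphism classes of indecomposable
non-projective Gorenstein projective modules over a gentle algebra equals the
number of arrows lying on oriented cycles with full relations, i.e.
`Σ_ℓ ℓ · φ_A(0, ℓ)` in terms of the AG-invariant. -/
theorem numIndecNonProjGP_eq_card_ocf_arrows
    (k : Type) [Field k] [IsAlgClosed k] (Q : GentleData) (hQ : IsGentle Q) :
    numIndecNonProjGP k Q = Set.ncard {a : Q.A | OnOCFCycle Q a} ∧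
    numIndecNonProjGP k Q =
      ∑ ℓ ∈ Finset.range (Fintype.card Q.A + 1), ℓ * AGzero Q ℓ :=
  numIndecNonProjGP_eq_card_ocf_arrows_general k Q hQ.isRightGentle
end

section
/- Let A = kQ/I be a gentle algebra and φ_A its AG-invariant. Then gl.dim A = ∞ if and only if there exists ℓ ≥ 1 with φ_A(0, ℓ) ≠ 0. -/
open MulOpposite DirectSum

set_option autoImplicit false

/-!
The nonzero paths form a `k`-basis of `A = kQ/I`. Hence the right ideals `bA`, for `b` an arrow, are
independent, and two syzygies can be read off: the kernel of `e_v A → S(v)` is the direct sum of the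
`bA` with `b` starting at `v`, and the kernel of the projective cover `e_{t(a)} A → aA` is the
direct sum of the `bA` with `ab ∈ I`. Moreover `aA` is not projective as soon as some such `b`
exists. The projective dimension of `aA` is therefore the length of the longest chain
`a = a₀, a₁, …` with all `aᵢ aᵢ₊₁ ∈ I`, and it is infinite when there is an infinite chain.
Otherwise, the arrows being finitely many, these lengths are bounded and so are the projective
dimensions of the simple modules, hence of all modules of finite length. Finally an infinite chain
repeats an arrow, and a shortest repetition closes up to a cycle with full relations.
-/

open CategoryTheory (HasProjectiveDimensionLE)

section ProjectiveDimension

open CategoryTheory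

universe u v

variable {R : Type u} [Ring R] {n : ℕ}
  {M N : Type v} [AddCommGroup M] [Module R M] [AddCommGroup N] [Module R N]

lemma hasProjectiveDimensionLE_of_subsingleton [Subsingleton M] :
    HasProjectiveDimensionLE (ModuleCat.of R M) n :=
  have := (ModuleCat.isZero_of_subsingleton (.of R M)).hasProjectiveDimensionLT_zero
  hasProjectiveDimensionLT_of_ge _ 0 (n + 1) (Nat.zero_le _)

lemma hasProjectiveDimensionLE_of_ker (f : M →ₗ[R] N) (hf : Function.Surjective f)
    (hker : HasProjectiveDimensionLE (ModuleCat.of R f.ker) n)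
    (hN : HasProjectiveDimensionLE (ModuleCat.of R N) n) :
    HasProjectiveDimensionLE (ModuleCat.of R M) n :=
  (LinearMap.shortExact_shortComplexKer hf).hasProjectiveDimensionLT_X₂ (n + 1) hker hN

lemma hasProjectiveDimensionLE_of_leftInverse (i : M →ₗ[R] N) (r : N →ₗ[R] M)
    (h : Function.LeftInverse r i) (hN : HasProjectiveDimensionLE (ModuleCat.of R N) n) :
    HasProjectiveDimensionLE (ModuleCat.of R M) n :=
  Retract.hasProjectiveDimensionLT
    { i := ModuleCat.ofHom i
      r := ModuleCat.ofHom r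
      retract := by ext x; exact h x } (n + 1)

lemma hasProjectiveDimensionLE_of_isFiniteLength
    (hsimple : ∀ (S : Type v) [AddCommGroup S] [Module R S] [IsSimpleModule R S],
      HasProjectiveDimensionLE (ModuleCat.of R S) n)
    (hM : IsFiniteLength R M) : HasProjectiveDimensionLE (ModuleCat.of R M) n := by
  induction hM with
  | of_subsingleton => exact hasProjectiveDimensionLE_of_subsingleton
  | @of_simple_quotient M _ _ N _ _ ih =>
    refine hasProjectiveDimensionLE_of_ker N.mkQ N.mkQ_surjective ?_ (hsimple (M ⧸ N))
    rwa [Submodule.ker_mkQ]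

variable [Small.{v} R]

lemma hasProjectiveDimensionLE_zero_iff_projective :
    HasProjectiveDimensionLE (ModuleCat.of R M) 0 ↔ Module.Projective R M := by
  rw [IsProjective.iff_projective, projective_iff_hasProjectiveDimensionLE_zero]

lemma hasProjectiveDimensionLE_congr (e : M ≃ₗ[R] N) :
    HasProjectiveDimensionLE (ModuleCat.of R M) n ↔
      HasProjectiveDimensionLE (ModuleCat.of R N) n :=
  ⟨fun _ ↦ ModuleCat.hasProjectiveDimensionLE_of_linearEquiv.{v, v}
      (M := .of R M) (N := .of R N) e n,
    fun _ ↦ ModuleCat.hasProjectiveDimensionLE_of_linearEquiv.{v, v}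
      (M := .of R N) (N := .of R M) e.symm n⟩

lemma hasProjectiveDimensionLE_succ_iff_ker [Module.Projective R M] (f : M →ₗ[R] N)
    (hf : Function.Surjective f) :
    HasProjectiveDimensionLE (ModuleCat.of R N) (n + 1) ↔
      HasProjectiveDimensionLE (ModuleCat.of R f.ker) n :=
  (LinearMap.shortExact_shortComplexKer hf).hasProjectiveDimensionLT_X₃_iff n
    ((IsProjective.iff_projective M).1 inferInstance)

lemma hasProjectiveDimensionLE_prod_iff :
    HasProjectiveDimensionLE (ModuleCat.of R (M × N)) n ↔
      HasProjectiveDimensionLE (ModuleCat.of R M) n ∧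
        HasProjectiveDimensionLE (ModuleCat.of R N) n := by
  refine ⟨fun h ↦ ⟨?_, ?_⟩, fun ⟨hM, hN⟩ ↦ ?_⟩
  · exact hasProjectiveDimensionLE_of_leftInverse (.inl R M N) (.fst R M N) (fun _ ↦ rfl) h
  · exact hasProjectiveDimensionLE_of_leftInverse (.inr R M N) (.snd R M N) (fun _ ↦ rfl) h
  · refine hasProjectiveDimensionLE_of_ker (.snd R M N) LinearMap.snd_surjective ?_ hN
    have e := LinearEquiv.ofInjective (.inl R M N) LinearMap.inl_injective
    rw [LinearMap.range_inl] at e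
    exact (hasProjectiveDimensionLE_congr e).1 hM

lemma hasProjectiveDimensionLE_sup_iff {N N' : Submodule R M} (h : Disjoint N N') :
    HasProjectiveDimensionLE (ModuleCat.of R ↥(N ⊔ N')) n ↔
      HasProjectiveDimensionLE (ModuleCat.of R N) n ∧
        HasProjectiveDimensionLE (ModuleCat.of R N') n := by
  have hinj : Function.Injective (N.subtype.coprod N'.subtype) := by
    rw [← LinearMap.ker_eq_bot, LinearMap.ker_coprod_of_disjoint_range _ _ (by simpa using h)]
    simp
  have e := LinearEquiv.ofInjective _ hinj
  rw [LinearMap.range_coprod, Submodule.range_subtype, Submodule.range_subtype] at e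
  rw [← hasProjectiveDimensionLE_congr e, hasProjectiveDimensionLE_prod_iff]

lemma hasProjectiveDimensionLE_finsetSup_iff {ι : Type*} {N : ι → Submodule R M} {s : Finset ι}
    (h : s.SupIndep N) :
    HasProjectiveDimensionLE (ModuleCat.of R ↥(s.sup N)) n ↔
      ∀ i ∈ s, HasProjectiveDimensionLE (ModuleCat.of R (N i)) n := by
  classical
  induction s using Finset.induction_on with
  | empty =>
    rw [Finset.sup_empty]
    simpa using hasProjectiveDimensionLE_of_subsingleton
  | insert i s hi ih =>
    have hdisj : Disjoint (N i) (s.sup N) :=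
      h (Finset.subset_insert i s) (Finset.mem_insert_self i s) hi
    rw [Finset.sup_insert, hasProjectiveDimensionLE_sup_iff hdisj,
      ih (h.subset (Finset.subset_insert i s)), Finset.forall_mem_insert]

lemma hasProjectiveDimensionLE_iSup_iff {ι : Type*} [Finite ι] {N : ι → Submodule R M}
    (h : iSupIndep N) :
    HasProjectiveDimensionLE (ModuleCat.of R ↥(⨆ i, N i)) n ↔
      ∀ i, HasProjectiveDimensionLE (ModuleCat.of R (N i)) n := by
  have := Fintype.ofFinite ι
  rw [← Finset.sup_univ_eq_iSup, hasProjectiveDimensionLE_finsetSup_iff h.sup_indep_univ]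
  simp

lemma projective_span_singleton_of_isIdempotentElem {A : Type*} [Ring A] {e : A}
    (he : IsIdempotentElem e) : Module.Projective Aᵐᵒᵖ (Submodule.span Aᵐᵒᵖ {e}) := by
  have hA : Module.Projective Aᵐᵒᵖ A := .of_equiv (opLinearEquiv Aᵐᵒᵖ (M := A)).symm
  have hmem (x : A) : LinearMap.mulLeft Aᵐᵒᵖ e x ∈ Submodule.span Aᵐᵒᵖ {e} :=
    Submodule.mem_span_singleton.2 ⟨op x, rfl⟩
  refine .of_split (Submodule.subtype _) ((LinearMap.mulLeft Aᵐᵒᵖ e).codRestrict _ hmem) ?_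
  ext ⟨x, hx⟩
  obtain ⟨y, rfl⟩ := Submodule.mem_span_singleton.1 hx
  simp [← mul_assoc, he.eq]

lemma hasProjectiveDimensionLE_succ_span_singleton_iff {A M : Type u} [Ring A] [AddCommGroup M]
    [Module Aᵐᵒᵖ M] {n : ℕ} {e : A} (he : IsIdempotentElem e) {y : M} (hy : op e • y = y)
    {N : Submodule Aᵐᵒᵖ A}
    (hN : ∀ x, x ∈ N ↔ x ∈ Submodule.span Aᵐᵒᵖ {e} ∧ op x • y = 0) :
    HasProjectiveDimensionLE (ModuleCat.of Aᵐᵒᵖ (Submodule.span Aᵐᵒᵖ {y})) (n + 1) ↔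
      HasProjectiveDimensionLE (ModuleCat.of Aᵐᵒᵖ N) n := by
  have := projective_span_singleton_of_isIdempotentElem he
  let f : A →ₗ[Aᵐᵒᵖ] M := LinearMap.toSpanSingleton Aᵐᵒᵖ M y ∘ₗ (opLinearEquiv Aᵐᵒᵖ).toLinearMap
  let g : Submodule.span Aᵐᵒᵖ {e} →ₗ[Aᵐᵒᵖ] Submodule.span Aᵐᵒᵖ {y} :=
    f.restrict fun x _ ↦ Submodule.mem_span_singleton.2 ⟨op x, rfl⟩
  have hg : Function.Surjective g := fun ⟨z, hz⟩ ↦ by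
    obtain ⟨r, rfl⟩ := Submodule.mem_span_singleton.1 hz
    refine ⟨⟨r • e, Submodule.smul_mem _ _ (Submodule.mem_span_singleton_self e)⟩, Subtype.ext ?_⟩
    change op (e * r.unop) • y = r • y
    rw [op_mul, op_unop, mul_smul, hy]
  have hker : g.ker = N.comap (Submodule.span Aᵐᵒᵖ {e}).subtype := by
    ext x
    have hx : g x = 0 ↔ op (x : A) • y = 0 := Subtype.ext_iff
    rw [LinearMap.mem_ker, hx, Submodule.mem_comap, hN, Submodule.subtype_apply,
      and_iff_right x.2]
  have hle : N ≤ Submodule.span Aᵐᵒᵖ {e} := fun x hx ↦ ((hN x).1 hx).1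
  rw [hasProjectiveDimensionLE_succ_iff_ker g hg, hker]
  exact hasProjectiveDimensionLE_congr (Submodule.comapSubtypeEquivOfLe hle)

end ProjectiveDimension

section Resolution

variable {R : Type} [Ring R] {n : ℕ} {M : Type} [AddCommGroup M] [Module R M]

lemma projDimLE_zero_iff_projective : projDimLE R 0 M ↔ Module.Projective R M := by
  refine ⟨fun ⟨P, d, ε, hP, hε, hd, _, hzero⟩ ↦ ?_, fun hM ↦ ?_⟩
  · have := hP 0
    have := hzero 0 le_rfl
    refine .of_equiv (LinearEquiv.ofBijective ε ⟨?_, hε⟩)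
    rw [injective_iff_map_eq_zero]
    intro x hx
    obtain ⟨y, rfl⟩ := (hd x).1 hx
    rw [Subsingleton.elim y 0, map_zero]
  · refine ⟨fun i ↦ i.casesOn (.of R M) fun _ ↦ .of R PUnit, fun _ ↦ 0, .id, ?_,
      Function.surjective_id, ?_, fun _ ↦ ?_, fun _ _ ↦ inferInstanceAs (Subsingleton PUnit)⟩
    · rintro (_ | i)
      exacts [hM, inferInstanceAs (Module.Projective R PUnit)]
    · exact fun x ↦ ⟨fun hx ↦ ⟨0, hx.symm⟩, fun ⟨y, hy⟩ ↦ hy.symm⟩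
    · exact fun x ↦ ⟨fun _ ↦ ⟨0, Subsingleton.elim (α := PUnit) _ _⟩, fun _ ↦ rfl⟩

lemma exists_projDimLE_ker (h : projDimLE R (n + 1) M) :
    ∃ (P : ModuleCat.{0} R) (f : P →ₗ[R] M),
      Module.Projective R P ∧ Function.Surjective f ∧ projDimLE R n f.ker := by
  obtain ⟨P, d, ε, hP, hε, hd, hdd, hzero⟩ := h
  refine ⟨P 0, ε, hP 0, hε, fun i ↦ P (i + 1), fun i ↦ d (i + 1),
    (d 0).codRestrict ε.ker hd.apply_apply_eq_zero, fun i ↦ hP (i + 1), ?_, fun x ↦ ?_,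
    fun i ↦ hdd (i + 1), fun i hi ↦ hzero (i + 1) (by lia)⟩
  · rintro ⟨x, hx⟩
    obtain ⟨y, rfl⟩ := (hd x).1 hx
    exact ⟨y, rfl⟩
  · rw [← hdd 0 x]
    exact Subtype.ext_iff

lemma projDimLE_succ_of_ker {P : Type} [AddCommGroup P] [Module R P] [Module.Projective R P]
    (f : P →ₗ[R] M) (hf : Function.Surjective f) (h : projDimLE R n f.ker) :
    projDimLE R (n + 1) M := by
  obtain ⟨P', d, ε, hP, hε, hd, hdd, hzero⟩ := h
  refine ⟨fun i ↦ i.casesOn (.of R P) P', fun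
    | 0 => f.ker.subtype ∘ₗ ε
    | i + 1 => d i, f, ?_, hf, fun x ↦ ?_, ?_, ?_⟩
  · rintro (_ | i)
    exacts [‹Module.Projective R P›, hP i]
  · exact ⟨fun hx ↦ (hε ⟨x, hx⟩).imp fun y hy ↦ congrArg Subtype.val hy,
      fun ⟨y, hy⟩ ↦ hy ▸ (ε y).2⟩
  · rintro (_ | i)
    · exact fun x ↦ Subtype.ext_iff.symm.trans (hd x)
    · exact hdd i
  · rintro (_ | i) hi
    · lia
    · exact hzero i (by lia)

theorem projDimLE_iff_hasProjectiveDimensionLE :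
    projDimLE R n M ↔ HasProjectiveDimensionLE (ModuleCat.of R M) n := by
  induction n generalizing M with
  | zero => rw [projDimLE_zero_iff_projective, hasProjectiveDimensionLE_zero_iff_projective]
  | succ n ih =>
    refine ⟨fun h ↦ ?_, fun h ↦ ?_⟩
    · obtain ⟨P, f, _, hf, hker⟩ := exists_projDimLE_ker h
      exact (hasProjectiveDimensionLE_succ_iff_ker f hf).2 (ih.1 hker)
    · have hf := Finsupp.linearCombination_id_surjective R M
      exact projDimLE_succ_of_ker _ hf
        (ih.2 ((hasProjectiveDimensionLE_succ_iff_ker _ hf).1 h))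

lemma projDim_le_of_hasProjectiveDimensionLE
    (h : HasProjectiveDimensionLE (ModuleCat.of R M) n) : projDim R M ≤ n :=
  sInf_le ⟨n, rfl, projDimLE_iff_hasProjectiveDimensionLE.2 h⟩

lemma projDim_eq_top_of_forall_not_hasProjectiveDimensionLE
    (h : ∀ n, ¬ HasProjectiveDimensionLE (ModuleCat.of R M) n) : projDim R M = ⊤ :=
  sInf_eq_top.2 fun _ ⟨n, _, hn⟩ ↦ (h n (projDimLE_iff_hasProjectiveDimensionLE.1 hn)).elim

variable (R)

lemma globalDim_eq_top_of_projDim_eq_top [Module.Finite R M] (h : projDim R M = ⊤) :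
    globalDim R = ⊤ :=
  top_le_iff.1 (h ▸ le_iSup₂ (f := fun (N : ModuleCat.{0} R) (_ : Module.Finite R N) ↦ projDim R N)
    (.of R M) ‹_›)

lemma globalDim_le_of_isArtinianRing [IsArtinianRing R]
    (hsimple : ∀ (S : Type) [AddCommGroup S] [Module R S] [IsSimpleModule R S],
      HasProjectiveDimensionLE (ModuleCat.of R S) n) :
    globalDim R ≤ n := by
  refine iSup₂_le fun M _ ↦ projDim_le_of_hasProjectiveDimensionLE ?_
  exact hasProjectiveDimensionLE_of_isFiniteLength hsimple
    (isFiniteLength_iff_isNoetherian_isArtinian.2 ⟨inferInstance, inferInstance⟩)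

end Resolution

section PathBasis

variable {k : Type} [Field k] {Q : GentleData}

lemma isIdempotentElem_idemOf (v : Q.V) : IsIdempotentElem (idemOf k Q v) := by
  simpa [IsIdempotentElem, idemOf, ofGen] using RingQuot.mkAlgHom_rel k (GentleRel.idem (k := k) v)

lemma idemOf_mul_idemOf_of_ne {v w : Q.V} (h : v ≠ w) : idemOf k Q v * idemOf k Q w = 0 := by
  simpa [idemOf, ofGen] using RingQuot.mkAlgHom_rel k (GentleRel.orth (k := k) v w h)

variable (k Q) in
lemma sum_idemOf : ∑ v, idemOf k Q v = 1 := by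
  simpa [idemOf, ofGen] using RingQuot.mkAlgHom_rel k (GentleRel.sum_idem (k := k) (Q := Q))

lemma idemOf_src_mul_arrOf (a : Q.A) : idemOf k Q (Q.src a) * arrOf k Q a = arrOf k Q a := by
  simpa [idemOf, arrOf, ofGen] using RingQuot.mkAlgHom_rel k (GentleRel.src_mul (k := k) a)

lemma arrOf_mul_idemOf_tgt (a : Q.A) : arrOf k Q a * idemOf k Q (Q.tgt a) = arrOf k Q a := by
  simpa [idemOf, arrOf, ofGen] using RingQuot.mkAlgHom_rel k (GentleRel.mul_tgt (k := k) a)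

lemma arrOf_mul_arrOf_of_rel {a b : Q.A} (h : Q.rel a b) : arrOf k Q a * arrOf k Q b = 0 := by
  simpa [arrOf, ofGen] using RingQuot.mkAlgHom_rel k (GentleRel.relation (k := k) a b h)

lemma arrOf_mul_idemOf_of_ne {a : Q.A} {v : Q.V} (h : Q.tgt a ≠ v) :
    arrOf k Q a * idemOf k Q v = 0 := by
  rw [← arrOf_mul_idemOf_tgt, mul_assoc, idemOf_mul_idemOf_of_ne h, mul_zero]

lemma mul_mem_of_forall_ofGen_mul_mem {S : Submodule k (GentleAlgebra k Q)}
    (hS : ∀ g, ∀ y ∈ S, ofGen k Q g * y ∈ S) (x : GentleAlgebra k Q) {y : GentleAlgebra k Q}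
    (hy : y ∈ S) : x * y ∈ S := by
  obtain ⟨x, rfl⟩ := RingQuot.mkAlgHom_surjective k (GentleRel k Q) x
  induction x using FreeAlgebra.induction generalizing y with
  | grade0 c =>
    rw [AlgHom.commutes, ← Algebra.smul_def]
    exact S.smul_mem c hy
  | grade1 g => exact hS g y hy
  | mul x x' hx hx' =>
    rw [map_mul, mul_assoc]
    exact hx (hx' hy)
  | add x x' hx hx' =>
    rw [map_add, add_mul]
    exact S.add_mem (hx hy) (hx' hy)

variable (Q) in
/-- A word is a vertex followed by a list of arrows, thought of as a path starting at that vertex;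
the vertex is recorded to tell the trivial paths apart. -/
abbrev PathWord : Type := Q.V × List Q.A

/-- Left multiplication by `e_w`, in terms of the coefficients of paths. -/
def vertexOperator (k : Type) [Field k] (Q : GentleData) (w : Q.V) :
    Module.End k (PathWord Q → k) where
  toFun f p := if p.1 = w then f p else 0
  map_add' f g := by ext p; by_cases h : p.1 = w <;> simp [h]
  map_smul' c f := by ext p; by_cases h : p.1 = w <;> simp [h]

open Classical in
/-- Left multiplication by an arrow `a`, in terms of the coefficients of paths: the coefficient of
a path `b·l` in `a·x` is that of `l` in `x` when `b = a` and `a·l` is not killed by the relations,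
and `0` otherwise. -/
noncomputable def arrowOperator (k : Type) [Field k] (Q : GentleData) (a : Q.A) :
    Module.End k (PathWord Q → k) where
  toFun f
    | (_, []) => 0
    | (v, b :: l) =>
      if b = a ∧ v = Q.src a ∧ ∀ c ∈ l.head?, ¬ Q.rel a c then f (Q.tgt a, l) else 0
  map_add' f g := by
    ext ⟨v, _ | ⟨b, l⟩⟩
    · simp
    · simp only [Pi.add_apply]; split_ifs <;> simp
  map_smul' c f := by
    ext ⟨v, _ | ⟨b, l⟩⟩
    · simp
    · simp only [Pi.smul_apply]; split_ifs <;> simp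

/-- The action of the generators of `kQ/I` on coefficients of paths. -/
noncomputable def genOperator (k : Type) [Field k] (Q : GentleData) :
    GenSym Q → Module.End k (PathWord Q → k)
  | .vertex v => vertexOperator k Q v
  | .arrow a => arrowOperator k Q a

lemma vertexOperator_apply (w : Q.V) (f : PathWord Q → k) (p : PathWord Q) :
    vertexOperator k Q w f p = if p.1 = w then f p else 0 := rfl

lemma arrowOperator_apply_nil (a : Q.A) (f : PathWord Q → k) (v : Q.V) :
    arrowOperator k Q a f (v, []) = 0 := rfl

open Classical in
lemma arrowOperator_apply_cons (a : Q.A) (f : PathWord Q → k) (v : Q.V) (b : Q.A) (l : List Q.A) :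
    arrowOperator k Q a f (v, b :: l) =
      if b = a ∧ v = Q.src a ∧ ∀ c ∈ l.head?, ¬ Q.rel a c then f (Q.tgt a, l) else 0 := rfl

lemma arrowOperator_mul_arrowOperator_of_rel {a b : Q.A} (hab : Q.rel a b) :
    arrowOperator k Q a * arrowOperator k Q b = 0 := by
  refine LinearMap.ext fun f ↦ funext fun (v, l) ↦ ?_
  rcases l with _ | ⟨c, _ | ⟨d, l⟩⟩
  · rfl
  · exact (arrowOperator_apply_cons ..).trans (ite_self _)
  · rw [Module.End.mul_apply, arrowOperator_apply_cons, arrowOperator_apply_cons]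
    split_ifs with hc hd
    · exact (hc.2.2 d rfl (hd.1 ▸ hab)).elim
    all_goals rfl

lemma lift_genOperator_eq_of_gentleRel {x y : FreeAlgebra k (GenSym Q)} (h : GentleRel k Q x y) :
    FreeAlgebra.lift k (genOperator k Q) x = FreeAlgebra.lift k (genOperator k Q) y := by
  refine LinearMap.ext fun f ↦ funext fun (v, l) ↦ ?_
  cases h with
  | idem w => by_cases hv : v = w <;> simp [genOperator, vertexOperator_apply, hv]
  | orth w w' hw =>
    by_cases hv : v = w <;> simp [genOperator, vertexOperator_apply, hv, hw]
  | sum_idem => simp [genOperator, vertexOperator_apply]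
  | src_mul a =>
    by_cases hv : v = Q.src a <;> rcases l with _ | ⟨b, l⟩ <;>
      simp [genOperator, vertexOperator_apply, arrowOperator_apply_nil, arrowOperator_apply_cons,
        hv]
  | mul_tgt a =>
    rcases l with _ | ⟨b, l⟩ <;>
      simp [genOperator, vertexOperator_apply, arrowOperator_apply_nil, arrowOperator_apply_cons]
  | relation a b hab => simp [genOperator, arrowOperator_mul_arrowOperator_of_rel hab]

variable (k Q) in
/-- The left regular representation of `kQ/I` on coefficients of paths. -/
noncomputable def pathRep : GentleAlgebra k Q →ₐ[k] Module.End k (PathWord Q → k) :=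
  RingQuot.liftAlgHom k
    ⟨FreeAlgebra.lift k (genOperator k Q), fun _ _ h ↦ lift_genOperator_eq_of_gentleRel h⟩

lemma pathRep_ofGen (g : GenSym Q) : pathRep k Q (ofGen k Q g) = genOperator k Q g := by
  simp [pathRep, ofGen]

variable (k Q) in
/-- The coefficients of an element of `kQ/I` in the basis of nonzero paths, obtained by applying
it to the coefficients of `1`. -/
noncomputable def pathCoeff : GentleAlgebra k Q →ₗ[k] PathWord Q → k :=
  (LinearMap.applyₗ fun p ↦ if p.2 = [] then 1 else 0) ∘ₗ (pathRep k Q).toLinearMap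

lemma pathCoeff_one (p : PathWord Q) : pathCoeff k Q 1 p = if p.2 = [] then 1 else 0 := by
  simp [pathCoeff]

lemma pathCoeff_idemOf_mul (w : Q.V) (x : GentleAlgebra k Q) (p : PathWord Q) :
    pathCoeff k Q (idemOf k Q w * x) p = if p.1 = w then pathCoeff k Q x p else 0 := by
  simp [pathCoeff, idemOf, pathRep_ofGen, genOperator, vertexOperator_apply]

lemma pathCoeff_arrOf_mul_nil (a : Q.A) (x : GentleAlgebra k Q) (v : Q.V) :
    pathCoeff k Q (arrOf k Q a * x) (v, []) = 0 := by
  simp [pathCoeff, arrOf, pathRep_ofGen, genOperator, arrowOperator_apply_nil]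

open Classical in
lemma pathCoeff_arrOf_mul_cons (a : Q.A) (x : GentleAlgebra k Q) (v : Q.V) (b : Q.A)
    (l : List Q.A) :
    pathCoeff k Q (arrOf k Q a * x) (v, b :: l) =
      if b = a ∧ v = Q.src a ∧ ∀ c ∈ l.head?, ¬ Q.rel a c then pathCoeff k Q x (Q.tgt a, l)
      else 0 := by
  simp [pathCoeff, arrOf, pathRep_ofGen, genOperator, arrowOperator_apply_cons]

/-- The word `(v, [a₁, …, aₙ])` is a path starting at `v` and containing no relation. -/
def IsNonzeroPath (p : PathWord Q) : Prop :=
  (∀ a ∈ p.2.head?, Q.src a = p.1) ∧ p.2.IsChain fun a b ↦ Q.tgt a = Q.src b ∧ ¬ Q.rel a b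

lemma isNonzeroPath_nil (v : Q.V) : IsNonzeroPath (v, []) := by
  simp [IsNonzeroPath]

lemma isNonzeroPath_cons_iff {v : Q.V} {a : Q.A} {l : List Q.A} :
    IsNonzeroPath (v, a :: l) ↔
      v = Q.src a ∧ (∀ c ∈ l.head?, ¬ Q.rel a c) ∧ IsNonzeroPath (Q.tgt a, l) := by
  cases l <;> simp [IsNonzeroPath] <;> tauto

variable (k) in
/-- The class of a word in `kQ/I`. -/
noncomputable def pathElt (p : PathWord Q) : GentleAlgebra k Q :=
  idemOf k Q p.1 * (p.2.map (arrOf k Q)).prod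

lemma pathElt_nil (v : Q.V) : pathElt k (v, []) = idemOf k Q v := by
  simp [pathElt]

lemma arrOf_mul_pathElt (a : Q.A) (l : List Q.A) :
    arrOf k Q a * pathElt k (Q.tgt a, l) = pathElt k (Q.src a, a :: l) := by
  simp [pathElt, ← mul_assoc, arrOf_mul_idemOf_tgt, idemOf_src_mul_arrOf]

lemma pathCoeff_pathElt {p : PathWord Q} (hp : IsNonzeroPath p) :
    pathCoeff k Q (pathElt k p) = Pi.single p 1 := by
  obtain ⟨v, l⟩ := p
  induction l generalizing v with
  | nil =>
    ext ⟨w, m⟩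
    rw [pathElt_nil, ← mul_one (idemOf k Q v), pathCoeff_idemOf_mul, pathCoeff_one]
    simp [Pi.single_apply, ite_and]
  | cons a l ih =>
    obtain ⟨rfl, ha, hl⟩ := isNonzeroPath_cons_iff.1 hp
    rw [← arrOf_mul_pathElt]
    ext ⟨w, _ | ⟨b, m⟩⟩
    · simp [pathCoeff_arrOf_mul_nil]
    · rw [pathCoeff_arrOf_mul_cons, ih _ hl]
      by_cases h : b = a ∧ w = Q.src a ∧ m = l
      · obtain ⟨rfl, rfl, rfl⟩ := h
        simpa using ha
      · have hne : ((w, b :: m) : PathWord Q) ≠ (Q.src a, a :: l) := by grind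
        rw [Pi.single_eq_of_ne hne]
        split_ifs with hb
        · exact Pi.single_eq_of_ne (by grind) _
        · rfl

lemma ofGen_mul_pathElt_mem_span (g : GenSym Q) {p : PathWord Q} (hp : IsNonzeroPath p) :
    ofGen k Q g * pathElt k p ∈ Submodule.span k (pathElt k '' {p | IsNonzeroPath p}) := by
  obtain ⟨v, l⟩ := p
  cases g with
  | vertex w =>
    change idemOf k Q w * (idemOf k Q v * _) ∈ _
    obtain rfl | hw := eq_or_ne w v
    · rw [← mul_assoc, (isIdempotentElem_idemOf w).eq]
      exact Submodule.subset_span ⟨_, hp, rfl⟩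
    · rw [← mul_assoc, idemOf_mul_idemOf_of_ne hw, zero_mul]
      exact zero_mem _
  | arrow a =>
    change arrOf k Q a * _ ∈ _
    obtain rfl | hv := eq_or_ne (Q.tgt a) v
    · rw [arrOf_mul_pathElt]
      by_cases ha : ∀ c ∈ l.head?, ¬ Q.rel a c
      · exact Submodule.subset_span ⟨_, isNonzeroPath_cons_iff.2 ⟨rfl, ha, hp⟩, rfl⟩
      · obtain ⟨c, hc, hac⟩ : ∃ c ∈ l.head?, Q.rel a c := by simpa using ha
        obtain ⟨l', rfl⟩ := List.head?_eq_some_iff.1 hc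
        have hsrc : Q.tgt a = Q.src c := (isNonzeroPath_cons_iff.1 hp).1
        rw [← arrOf_mul_pathElt, hsrc, ← arrOf_mul_pathElt, ← mul_assoc,
          arrOf_mul_arrOf_of_rel hac, zero_mul]
        exact zero_mem _
    · rw [pathElt, ← mul_assoc, arrOf_mul_idemOf_of_ne hv, zero_mul]
      exact zero_mem _

lemma span_pathElt_eq_top :
    Submodule.span k (pathElt k '' {p : PathWord Q | IsNonzeroPath p}) = ⊤ := by
  have hone : (1 : GentleAlgebra k Q) ∈
      Submodule.span k (pathElt k '' {p : PathWord Q | IsNonzeroPath p}) := by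
    rw [← sum_idemOf k Q]
    exact sum_mem fun v _ ↦ Submodule.subset_span ⟨(v, []), isNonzeroPath_nil v, pathElt_nil v⟩
  refine (Submodule.eq_top_iff').2 fun x ↦ mul_one x ▸
    mul_mem_of_forall_ofGen_mul_mem (fun g y hy ↦ ?_) x hone
  induction hy using Submodule.span_induction with
  | mem y hy =>
    obtain ⟨p, hp, rfl⟩ := hy
    exact ofGen_mul_pathElt_mem_span g hp
  | zero => simp
  | add y y' _ _ hy hy' => exact mul_add (ofGen k Q g) y y' ▸ add_mem hy hy'
  | smul c y _ hy => exact mul_smul_comm c (ofGen k Q g) y ▸ Submodule.smul_mem _ c hy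

lemma mem_span_pathElt_image (x : GentleAlgebra k Q) :
    x ∈ Submodule.span k (pathElt k '' {p | IsNonzeroPath p ∧ pathCoeff k Q x p ≠ 0}) := by
  have hx : x ∈ Submodule.span k (pathElt k '' {p | IsNonzeroPath p}) :=
    span_pathElt_eq_top (k := k) (Q := Q) ▸ Submodule.mem_top
  obtain ⟨c, hc, rfl⟩ := (Finsupp.mem_span_image_iff_linearCombination k).1 hx
  have hcoeff : pathCoeff k Q (Finsupp.linearCombination k (pathElt k) c) = c := by
    have hsingle (q) (hq : q ∈ c.support) :
        pathCoeff k Q (c q • pathElt k q) = c q • Pi.single q 1 := by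
      rw [map_smul, pathCoeff_pathElt (hc hq)]
    rw [Finsupp.linearCombination_apply, Finsupp.sum, map_sum, Finset.sum_congr rfl hsingle]
    ext p
    simp [Pi.single_apply]
  refine (Finsupp.mem_span_image_iff_linearCombination k).2 ⟨c, fun p hp ↦ ⟨hc hp, ?_⟩, rfl⟩
  rw [hcoeff]
  exact Finsupp.mem_support_iff.1 hp

lemma mem_of_forall_pathElt_mem {N : Submodule k (GentleAlgebra k Q)} {x : GentleAlgebra k Q}
    (h : ∀ p, IsNonzeroPath p → pathCoeff k Q x p ≠ 0 → pathElt k p ∈ N) : x ∈ N := by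
  refine Submodule.span_le.2 ?_ (mem_span_pathElt_image x)
  rintro _ ⟨p, ⟨hp, hx⟩, rfl⟩
  exact h p hp hx

end PathBasis

section ArrowModule

variable {k : Type} [Field k] {Q : GentleData}

lemma mem_vertexModule_iff {v : Q.V} {x : GentleAlgebra k Q} :
    x ∈ vertexModule k Q v ↔ idemOf k Q v * x = x := by
  refine ⟨fun hx ↦ ?_, fun hx ↦ Submodule.mem_span_singleton.2 ⟨op x, hx⟩⟩
  obtain ⟨y, rfl⟩ := Submodule.mem_span_singleton.1 hx
  rw [smul_eq_mul_unop, ← mul_assoc, (isIdempotentElem_idemOf v).eq]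

lemma mem_arrowModule_iff {a : Q.A} {x : GentleAlgebra k Q} :
    x ∈ arrowModule k Q a ↔ ∃ y, arrOf k Q a * y = x := by
  rw [arrowModule, Submodule.mem_span_singleton]
  exact opEquiv.symm.exists_congr_left

lemma arrOf_mul_mem_arrowModule (a : Q.A) (x : GentleAlgebra k Q) :
    arrOf k Q a * x ∈ arrowModule k Q a :=
  mem_arrowModule_iff.2 ⟨x, rfl⟩

lemma pathElt_cons_mem_arrowModule {v : Q.V} {a : Q.A} {l : List Q.A}
    (h : IsNonzeroPath (v, a :: l)) : pathElt k (v, a :: l) ∈ arrowModule k Q a := by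
  obtain ⟨rfl, -, -⟩ := isNonzeroPath_cons_iff.1 h
  exact arrOf_mul_pathElt (k := k) a l ▸ arrOf_mul_mem_arrowModule a _

lemma pathCoeff_eq_zero_of_mem_vertexModule {v : Q.V} {x : GentleAlgebra k Q}
    (hx : x ∈ vertexModule k Q v) {p : PathWord Q} (hp : p.1 ≠ v) : pathCoeff k Q x p = 0 := by
  rw [← mem_vertexModule_iff.1 hx, pathCoeff_idemOf_mul, if_neg hp]

variable (k) in
/-- The elements of `kQ/I` all of whose path coefficients outside `T` vanish. -/
noncomputable def pathSpan (T : Set (PathWord Q)) : Submodule k (GentleAlgebra k Q) :=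
  (Submodule.pi Tᶜ fun _ ↦ ⊥).comap (pathCoeff k Q)

lemma mem_pathSpan_iff {T : Set (PathWord Q)} {x : GentleAlgebra k Q} :
    x ∈ pathSpan k T ↔ ∀ p ∉ T, pathCoeff k Q x p = 0 := by
  simp [pathSpan, Submodule.mem_pi]

lemma eq_zero_of_mem_pathSpan {T : Set (PathWord Q)} (hT : ∀ p ∈ T, ¬ IsNonzeroPath p)
    {x : GentleAlgebra k Q} (hx : x ∈ pathSpan k T) : x = 0 := by
  refine (Submodule.mem_bot k).1 (mem_of_forall_pathElt_mem fun p hp hpx ↦ ?_)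
  exact (hpx (mem_pathSpan_iff.1 hx p fun hpT ↦ hT p hpT hp)).elim

lemma disjoint_pathSpan {T T' : Set (PathWord Q)} (h : Disjoint T T') :
    Disjoint (pathSpan k T) (pathSpan k T') := by
  refine Submodule.disjoint_def.2 fun x hx hx' ↦
    eq_zero_of_mem_pathSpan (T := ∅) (by simp) (mem_pathSpan_iff.2 fun p _ ↦ ?_)
  by_cases hp : p ∈ T
  · exact mem_pathSpan_iff.1 hx' p (h.notMem_of_mem_left hp)
  · exact mem_pathSpan_iff.1 hx p hp

lemma restrictScalars_arrowModule_le_pathSpan (a : Q.A) :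
    (arrowModule k Q a).restrictScalars k ≤ pathSpan k {p | p.2.head? = some a} := by
  intro x hx
  obtain ⟨y, rfl⟩ := mem_arrowModule_iff.1 hx
  refine mem_pathSpan_iff.2 fun (v, l) hl ↦ ?_
  rcases l with _ | ⟨b, l⟩
  · exact pathCoeff_arrOf_mul_nil a y v
  · rw [pathCoeff_arrOf_mul_cons, if_neg fun hb ↦ hl (congrArg some hb.1)]

lemma iSupIndep_arrowModule : iSupIndep (arrowModule k Q) := by
  intro a
  have hle : (⨆ b ≠ a, arrowModule k Q b).restrictScalars k ≤
      pathSpan k {p | p.2.head? ≠ some a} := by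
    change Submodule.restrictScalarsLatticeHom k _ _ _ ≤ _
    rw [map_iSup₂]
    refine iSup₂_le fun b hb ↦ (restrictScalars_arrowModule_le_pathSpan b).trans fun x hx ↦
      mem_pathSpan_iff.2 fun p hp ↦ mem_pathSpan_iff.1 hx p fun hpb ↦ hp ?_
    exact fun hpa ↦ hb (Option.some_injective _ (hpb.symm.trans hpa))
  refine Submodule.disjoint_def.2 fun x hx hx' ↦ Submodule.disjoint_def.1
    (disjoint_pathSpan ?_) x (restrictScalars_arrowModule_le_pathSpan a hx) (hle hx')
  exact Set.disjoint_left.2 fun p hp hp' ↦ hp' hp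

lemma mul_mem_pathSpan_le_length {n : ℕ} (y : GentleAlgebra k Q) {x : GentleAlgebra k Q}
    (hx : x ∈ pathSpan k {p | n ≤ p.2.length}) : y * x ∈ pathSpan k {p | n ≤ p.2.length} := by
  refine mul_mem_of_forall_ofGen_mul_mem (fun g z hz ↦ mem_pathSpan_iff.2 fun (v, l) hl ↦ ?_) y hx
  rw [mem_pathSpan_iff] at hz
  cases g with
  | vertex w => exact (pathCoeff_idemOf_mul w z _).trans (by simp [hz _ hl])
  | arrow a =>
    rcases l with _ | ⟨b, l⟩
    · exact pathCoeff_arrOf_mul_nil a z v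
    · refine (pathCoeff_arrOf_mul_cons a z v b l).trans ?_
      rw [hz _ fun hn ↦ hl (hn.trans (Nat.le_succ _)), ite_self]

lemma arrOf_mul_mem_pathSpan_succ_le_length {n : ℕ} (a : Q.A) {x : GentleAlgebra k Q}
    (hx : x ∈ pathSpan k {p | n ≤ p.2.length}) :
    arrOf k Q a * x ∈ pathSpan k {p | n + 1 ≤ p.2.length} := by
  refine mem_pathSpan_iff.2 fun (v, l) hl ↦ ?_
  rcases l with _ | ⟨b, l⟩
  · exact pathCoeff_arrOf_mul_nil a x v
  · rw [pathCoeff_arrOf_mul_cons,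
      mem_pathSpan_iff.1 hx _ fun hn ↦ hl (Nat.succ_le_succ hn), ite_self]

lemma mul_mem_pathSpan_succ_le_length {n : ℕ} {z x : GentleAlgebra k Q}
    (hz : z ∈ ⨆ a, arrowModule k Q a) (hx : x ∈ pathSpan k {p | n ≤ p.2.length}) :
    z * x ∈ pathSpan k {p | n + 1 ≤ p.2.length} := by
  induction hz using Submodule.iSup_induction' with
  | mem a z hz =>
    obtain ⟨y, rfl⟩ := mem_arrowModule_iff.1 hz
    rw [mul_assoc]
    exact arrOf_mul_mem_pathSpan_succ_le_length a (mul_mem_pathSpan_le_length y hx)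
  | zero => simp
  | add z z' _ _ hz hz' => exact add_mul z z' x ▸ add_mem hz hz'

lemma pow_mem_pathSpan_le_length {z : GentleAlgebra k Q} (hz : z ∈ ⨆ a, arrowModule k Q a)
    (n : ℕ) : z ^ n ∈ pathSpan k {p | n ≤ p.2.length} := by
  induction n with
  | zero => simp [mem_pathSpan_iff]
  | succ n ih => exact pow_succ' z n ▸ mul_mem_pathSpan_succ_le_length hz ih

end ArrowModule

section BoundedPaths

variable {k : Type} [Field k] {Q : GentleData}

/-- Paths of `Q` avoiding the relations have bounded length, that is, the ideal of relations is
admissible. -/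
def HasBoundedPaths (Q : GentleData) : Prop :=
  ∃ N : ℕ, ∀ p : ℕ → Q.A,
    ¬ ∀ i, i < N → Q.tgt (p i) = Q.src (p (i + 1)) ∧ ¬ Q.rel (p i) (p (i + 1))

lemma exists_length_le_of_hasBoundedPaths (hQ : HasBoundedPaths Q) :
    ∃ N, ∀ p : PathWord Q, IsNonzeroPath p → p.2.length ≤ N := by
  obtain ⟨N, hN⟩ := hQ
  refine ⟨N, fun (v, l) hl ↦ le_of_not_gt fun hlen ↦ ?_⟩
  have hne : l ≠ [] := List.ne_nil_of_length_pos (by lia)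
  refine hN (fun i ↦ l.getD i (l.head hne)) fun i hi ↦ ?_
  have hi' : i + 1 < l.length := by lia
  simpa [List.getD_eq_getElem, hi', Nat.lt_of_succ_lt hi'] using
    List.isChain_iff_getElem.1 hl.2 i hi'

lemma finite_setOf_isNonzeroPath (hQ : HasBoundedPaths Q) :
    {p : PathWord Q | IsNonzeroPath p}.Finite := by
  obtain ⟨N, hN⟩ := exists_length_le_of_hasBoundedPaths hQ
  exact (Set.finite_univ.prod (List.finite_length_le Q.A N)).subset
    fun p hp ↦ ⟨Set.mem_univ p.1, hN p hp⟩

lemma finite_gentleAlgebra_of_hasBoundedPaths (hQ : HasBoundedPaths Q) :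
    Module.Finite k (GentleAlgebra k Q) :=
  Module.finite_def.2 ⟨((finite_setOf_isNonzeroPath hQ).image (pathElt k)).toFinset, by
    rw [Set.Finite.coe_toFinset, span_pathElt_eq_top]⟩

lemma isNilpotent_of_mem_iSup_arrowModule (hQ : HasBoundedPaths Q) {z : GentleAlgebra k Q}
    (hz : z ∈ ⨆ a, arrowModule k Q a) : IsNilpotent z := by
  obtain ⟨N, hN⟩ := exists_length_le_of_hasBoundedPaths hQ
  refine ⟨N + 1, eq_zero_of_mem_pathSpan (fun p hp hp' ↦ ?_) (pow_mem_pathSpan_le_length hz _)⟩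
  exact Nat.not_succ_le_self N (hp.out.trans (hN p hp'))

end BoundedPaths

lemma eq_zero_of_isNilpotent_of_smul_eq {R M : Type*} [Ring R] [AddCommGroup M] [Module R M]
    {r : R} (hr : IsNilpotent r) {y : M} (hy : r • y = y) : y = 0 :=
  hr.isUnit_one_sub.smul_eq_zero.1 (by rw [sub_smul, one_smul, hy, sub_self])

section Syzygies

variable {k : Type} [Field k] {Q : GentleData} {n : ℕ} {a b : Q.A}

variable (Q) in
/-- The length-two path `a·b` is a relation; chains of such steps are the forbidden paths. -/
def ForbiddenStep (a b : Q.A) : Prop :=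
  Q.tgt a = Q.src b ∧ Q.rel a b

lemma arrOf_mem_vertexModule (a : Q.A) : arrOf k Q a ∈ vertexModule k Q (Q.src a) :=
  mem_vertexModule_iff.2 (idemOf_src_mul_arrOf a)

lemma arrowModule_le_vertexModule (a : Q.A) : arrowModule k Q a ≤ vertexModule k Q (Q.src a) :=
  (Submodule.span_singleton_le_iff_mem _ _).2 (arrOf_mem_vertexModule a)

lemma arrOf_ne_zero (a : Q.A) : arrOf k Q a ≠ 0 := fun ha ↦ by
  have h := pathCoeff_arrOf_mul_cons (k := k) a 1 (Q.src a) a []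
  simp [ha, pathCoeff_one] at h

lemma mem_iSup_arrowModule_of_arrOf_mul_eq_zero {x : GentleAlgebra k Q}
    (hx : x ∈ vertexModule k Q (Q.tgt a)) (hax : arrOf k Q a * x = 0) :
    x ∈ ⨆ b : {b // ForbiddenStep Q a b}, arrowModule k Q b := by
  refine (Submodule.restrictScalars_mem k _ _).1 (mem_of_forall_pathElt_mem ?_)
  rintro ⟨v, l⟩ hp hpx
  obtain rfl : v = Q.tgt a := by_contra fun hv ↦ hpx (pathCoeff_eq_zero_of_mem_vertexModule hx hv)
  have hcoeff := pathCoeff_arrOf_mul_cons a x (Q.src a) a l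
  rw [hax, map_zero, Pi.zero_apply] at hcoeff
  obtain ⟨b, hbl, hab⟩ : ∃ b ∈ l.head?, Q.rel a b := by
    by_contra! h
    exact hpx ((if_pos ⟨rfl, rfl, h⟩).symm.trans hcoeff.symm)
  obtain ⟨l, rfl⟩ := List.head?_eq_some_iff.1 hbl
  exact Submodule.mem_iSup_of_mem (p := fun b : {b // ForbiddenStep Q a b} ↦ arrowModule k Q b)
    ⟨b, (isNonzeroPath_cons_iff.1 hp).1, hab⟩ (pathElt_cons_mem_arrowModule hp)

lemma mem_iSup_arrowModule_iff_arrOf_mul_eq_zero {x : GentleAlgebra k Q} :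
    x ∈ ⨆ b : {b // ForbiddenStep Q a b}, arrowModule k Q b ↔
      x ∈ vertexModule k Q (Q.tgt a) ∧ arrOf k Q a * x = 0 := by
  refine ⟨fun hx ↦ ?_, fun ⟨hx, hax⟩ ↦ mem_iSup_arrowModule_of_arrOf_mul_eq_zero hx hax⟩
  induction hx using Submodule.iSup_induction' with
  | mem b x hx =>
    obtain ⟨y, rfl⟩ := mem_arrowModule_iff.1 hx
    refine ⟨b.2.1 ▸ arrowModule_le_vertexModule _ hx, ?_⟩
    rw [← mul_assoc, arrOf_mul_arrOf_of_rel b.2.2, zero_mul]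
  | zero => exact ⟨zero_mem _, mul_zero _⟩
  | add x y _ _ hx hy => exact ⟨add_mem hx.1 hy.1, by rw [mul_add, hx.2, hy.2, add_zero]⟩

lemma hasProjectiveDimensionLE_succ_arrowModule_iff :
    HasProjectiveDimensionLE (ModuleCat.of (GentleAlgebra k Q)ᵐᵒᵖ (arrowModule k Q a)) (n + 1) ↔
      ∀ b, ForbiddenStep Q a b →
        HasProjectiveDimensionLE (ModuleCat.of (GentleAlgebra k Q)ᵐᵒᵖ (arrowModule k Q b)) n := by
  have hsyzygy := hasProjectiveDimensionLE_succ_span_singleton_iff (n := n)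
    (isIdempotentElem_idemOf (Q.tgt a)) (y := arrOf k Q a) (arrOf_mul_idemOf_tgt a)
    fun _ ↦ mem_iSup_arrowModule_iff_arrOf_mul_eq_zero
  exact (hsyzygy.trans <| hasProjectiveDimensionLE_iSup_iff <|
    iSupIndep_arrowModule.comp Subtype.val_injective).trans Subtype.forall

lemma not_projective_arrowModule (hQ : HasBoundedPaths Q) (hab : ForbiddenStep Q a b) :
    ¬ Module.Projective (GentleAlgebra k Q)ᵐᵒᵖ (arrowModule k Q a) := fun _ ↦ by
  obtain ⟨s, hs⟩ := Module.projective_lifting_property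
    ((LinearMap.mulLeft (GentleAlgebra k Q)ᵐᵒᵖ (arrOf k Q a)).codRestrict (arrowModule k Q a)
      (arrOf_mul_mem_arrowModule a)) LinearMap.id
    fun ⟨x, hx⟩ ↦ (mem_arrowModule_iff.1 hx).imp fun _ ↦ Subtype.ext
  let a' : arrowModule k Q a := ⟨arrOf k Q a, Submodule.mem_span_singleton_self _⟩
  have hmul : arrOf k Q a * s a' = arrOf k Q a := congrArg Subtype.val (LinearMap.congr_fun hs a')
  have hmulb : s a' * arrOf k Q b = 0 := by
    have hab' : op (arrOf k Q b) • a' = 0 := Subtype.ext (arrOf_mul_arrOf_of_rel hab.2)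
    simpa using (map_smul s (op (arrOf k Q b)) a').symm.trans (by rw [hab', map_zero])
  let e := idemOf k Q (Q.tgt a)
  have hker : e - e * s a' ∈ ⨆ b : {b // ForbiddenStep Q a b}, arrowModule k Q b := by
    refine mem_iSup_arrowModule_iff_arrOf_mul_eq_zero.2 ⟨mem_vertexModule_iff.2 ?_, ?_⟩
    · rw [mul_sub, ← mul_assoc, (isIdempotentElem_idemOf (Q.tgt a)).eq]
    · rw [mul_sub, ← mul_assoc, arrOf_mul_idemOf_tgt, hmul, sub_self]
  have hfix : (e - e * s a') * arrOf k Q b = arrOf k Q b := by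
    rw [sub_mul, mul_assoc, hmulb, mul_zero, sub_zero]
    simp only [e, hab.1, idemOf_src_mul_arrOf]
  exact arrOf_ne_zero b <| eq_zero_of_isNilpotent_of_smul_eq
    (isNilpotent_of_mem_iSup_arrowModule hQ (iSup_comp_le (arrowModule k Q) _ hker)) hfix

lemma not_hasProjectiveDimensionLE_arrowModule (hQ : HasBoundedPaths Q) {p : ℕ → Q.A}
    (hp : ∀ i, ForbiddenStep Q (p i) (p (i + 1))) (n i : ℕ) :
    ¬ HasProjectiveDimensionLE
      (ModuleCat.of (GentleAlgebra k Q)ᵐᵒᵖ (arrowModule k Q (p i))) n := by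
  induction n generalizing i with
  | zero =>
    exact hasProjectiveDimensionLE_zero_iff_projective.not.2 (not_projective_arrowModule hQ (hp i))
  | succ n ih =>
    exact fun h ↦ ih (i + 1) (hasProjectiveDimensionLE_succ_arrowModule_iff.1 h _ (hp i))

end Syzygies

section SimpleModule

variable {k : Type} [Field k] {Q : GentleData}

lemma sub_smul_idemOf_mem_iSup_arrowModule {v : Q.V} {x : GentleAlgebra k Q}
    (hx : x ∈ vertexModule k Q v) :
    x - pathCoeff k Q x (v, []) • idemOf k Q v ∈
      ⨆ b : {b // Q.src b = v}, arrowModule k Q b := by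
  refine (Submodule.restrictScalars_mem k _ _).1 (mem_of_forall_pathElt_mem ?_)
  rintro ⟨w, l⟩ hp hpx
  rw [map_sub, map_smul, ← pathElt_nil, pathCoeff_pathElt (isNonzeroPath_nil v)] at hpx
  obtain rfl : w = v := by_contra fun hw ↦ hpx (by
    simp [pathCoeff_eq_zero_of_mem_vertexModule hx, hw])
  rcases l with _ | ⟨b, l⟩
  · simp at hpx
  · exact Submodule.mem_iSup_of_mem (p := fun b : {b // Q.src b = w} ↦ arrowModule k Q b)
      ⟨b, (isNonzeroPath_cons_iff.1 hp).1.symm⟩ (pathElt_cons_mem_arrowModule hp)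

variable {S : Type*} [AddCommGroup S] [Module (GentleAlgebra k Q)ᵐᵒᵖ S]

lemma op_arrOf_smul_eq_zero [IsSimpleModule (GentleAlgebra k Q)ᵐᵒᵖ S] (hQ : HasBoundedPaths Q)
    (a : Q.A) (y : S) : op (arrOf k Q a) • y = 0 := by
  by_contra hay
  obtain ⟨x, hx⟩ := Submodule.mem_span_singleton.1 <|
    IsSimpleModule.span_singleton_eq_top (GentleAlgebra k Q)ᵐᵒᵖ hay ▸ Submodule.mem_top (x := y)
  obtain ⟨n, hn⟩ := isNilpotent_of_mem_iSup_arrowModule hQ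
    (Submodule.mem_iSup_of_mem a (arrOf_mul_mem_arrowModule (k := k) a x.unop))
  have hnil : IsNilpotent (x * op (arrOf k Q a)) :=
    ⟨n, unop_injective ((unop_pow ..).trans hn)⟩
  rw [eq_zero_of_isNilpotent_of_smul_eq hnil ((mul_smul ..).trans hx), smul_zero] at hay
  exact hay rfl

lemma op_smul_eq_zero_of_mem_iSup_arrowModule {s : Set Q.A} {y : S}
    (hy : ∀ a, op (arrOf k Q a) • y = 0)
    {x : GentleAlgebra k Q} (hx : x ∈ ⨆ a : s, arrowModule k Q a) : op x • y = 0 := by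
  induction hx using Submodule.iSup_induction' with
  | mem a x hx =>
    obtain ⟨z, rfl⟩ := mem_arrowModule_iff.1 hx
    rw [op_mul, mul_smul, hy, smul_zero]
  | zero => exact zero_smul _ y
  | add x x' _ _ hx hx' => rw [op_add, add_smul, hx, hx', add_zero]

lemma exists_op_idemOf_smul_eq [Nontrivial S] :
    ∃ (v : Q.V) (y : S), op (idemOf k Q v) • y = y ∧ y ≠ 0 := by
  obtain ⟨y, hy⟩ := exists_ne (0 : S)
  obtain ⟨v, hv⟩ : ∃ v, op (idemOf k Q v) • y ≠ 0 := by
    by_contra! h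
    have hsum : op (∑ v, idemOf k Q v) • y = 0 := by
      rw [Finset.op_sum, Finset.sum_smul, Finset.sum_eq_zero fun v _ ↦ h v]
    rw [sum_idemOf, op_one, one_smul] at hsum
    exact hy hsum
  exact ⟨v, _, by rw [← mul_smul, ← op_mul, (isIdempotentElem_idemOf v).eq], hv⟩

lemma mem_iSup_arrowModule_iff_op_smul_eq_zero {v : Q.V} {y : S} (hy : y ≠ 0)
    (hv : op (idemOf k Q v) • y = y) (harr : ∀ a, op (arrOf k Q a) • y = 0)
    {x : GentleAlgebra k Q} :
    x ∈ ⨆ b : {b // Q.src b = v}, arrowModule k Q b ↔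
      x ∈ vertexModule k Q v ∧ op x • y = 0 := by
  refine ⟨fun hx ↦ ⟨?_, op_smul_eq_zero_of_mem_iSup_arrowModule harr hx⟩, fun ⟨hx, hxy⟩ ↦ ?_⟩
  · have hle (b : {b // Q.src b = v}) : arrowModule k Q b ≤ vertexModule k Q v :=
      (arrowModule_le_vertexModule b.1).trans_eq (congrArg _ b.2)
    exact iSup_le hle hx
  · have hmem := sub_smul_idemOf_mem_iSup_arrowModule hx
    have hzero := op_smul_eq_zero_of_mem_iSup_arrowModule harr hmem
    set c := pathCoeff k Q x (v, [])
    have hc : c = 0 := by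
      by_contra hc
      rw [op_sub, sub_smul, hxy, zero_sub, neg_eq_zero] at hzero
      have h : op (algebraMap k (GentleAlgebra k Q) c⁻¹) • op (c • idemOf k Q v) • y = y := by
        rw [← mul_smul, ← op_mul, ← Algebra.commutes, ← Algebra.smul_def, inv_smul_smul₀ hc, hv]
      exact hy (by rw [← h, hzero, smul_zero])
    rwa [hc, zero_smul, sub_zero] at hmem

lemma hasProjectiveDimensionLE_succ_of_isSimpleModule (hQ : HasBoundedPaths Q) {n : ℕ}
    (h : ∀ a, HasProjectiveDimensionLE
      (ModuleCat.of (GentleAlgebra k Q)ᵐᵒᵖ (arrowModule k Q a)) n)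
    (S : Type) [AddCommGroup S] [Module (GentleAlgebra k Q)ᵐᵒᵖ S]
    [IsSimpleModule (GentleAlgebra k Q)ᵐᵒᵖ S] :
    HasProjectiveDimensionLE (ModuleCat.of (GentleAlgebra k Q)ᵐᵒᵖ S) (n + 1) := by
  have := IsSimpleModule.nontrivial (GentleAlgebra k Q)ᵐᵒᵖ S
  obtain ⟨v, y, hv, hy⟩ := exists_op_idemOf_smul_eq (k := k) (Q := Q) (S := S)
  have hspan := IsSimpleModule.span_singleton_eq_top (GentleAlgebra k Q)ᵐᵒᵖ hy
  have hsyzygy := hasProjectiveDimensionLE_succ_span_singleton_iff (n := n)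
    (isIdempotentElem_idemOf v) hv fun _ ↦
      mem_iSup_arrowModule_iff_op_smul_eq_zero hy hv fun a ↦ op_arrOf_smul_eq_zero hQ a y
  have hsum := hasProjectiveDimensionLE_iSup_iff (n := n)
    ((iSupIndep_arrowModule (k := k)).comp (Subtype.val_injective (p := fun b ↦ Q.src b = v)))
  exact (hasProjectiveDimensionLE_congr (LinearEquiv.ofTop _ hspan)).1
    (hsyzygy.2 (hsum.2 fun b ↦ h b))

end SimpleModule

section ForbiddenCycle

lemma exists_minimal_recurrence {α : Type*} [Finite α] (p : ℕ → α) :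
    ∃ i ℓ, 1 ≤ ℓ ∧ p (i + ℓ) = p i ∧ Set.InjOn (fun j ↦ p (i + j)) (Set.Iio ℓ) := by
  classical
  have hex : ∃ ℓ, 1 ≤ ℓ ∧ ∃ i, p (i + ℓ) = p i := by
    obtain ⟨i, j, hne, hij⟩ := Finite.exists_ne_map_eq_of_infinite p
    wlog hlt : i < j generalizing i j
    · exact this j i hne.symm hij.symm (by lia)
    · exact ⟨j - i, by lia, i, by rw [hij, Nat.add_sub_cancel' hlt.le]⟩
  obtain ⟨hpos, i, hi⟩ := Nat.find_spec hex
  refine ⟨i, Nat.find hex, hpos, hi, fun x hx y hy hxy ↦ ?_⟩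
  by_contra hne
  wlog hlt : x < y generalizing x y
  · exact this y hy x hx hxy.symm (Ne.symm hne) (by lia)
  · refine Nat.find_min hex (m := y - x) (by grind) ⟨by lia, i + x, ?_⟩
    rw [add_assoc, Nat.add_sub_cancel' hlt.le]
    exact hxy.symm

lemma exists_injective_cycle_of_chain {α : Type*} [Finite α] {r : α → α → Prop} {p : ℕ → α}
    (hp : ∀ i, r (p i) (p (i + 1))) :
    ∃ ℓ : ℕ, 1 ≤ ℓ ∧ ∃ c : ZMod ℓ → α, (∀ i, r (c i) (c (i + 1))) ∧ Function.Injective c := by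
  obtain ⟨i, ℓ, hℓ, hi, hinj⟩ := exists_minimal_recurrence p
  have : NeZero ℓ := ⟨by lia⟩
  refine ⟨ℓ, hℓ, fun x ↦ p (i + x.val), fun x ↦ ?_, fun x y hxy ↦
    ZMod.val_injective ℓ (hinj (ZMod.val_lt x) (ZMod.val_lt y) hxy)⟩
  have hsucc : p (i + (x + 1).val) = p (i + x.val + 1) := by
    rw [ZMod.val_add, ZMod.val_one_eq_one_mod, Nat.add_mod_mod, add_assoc]
    rcases (Nat.succ_le_of_lt (ZMod.val_lt x)).lt_or_eq with h | h
    · rw [Nat.mod_eq_of_lt h]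
    · rw [← Nat.succ_eq_add_one, h, Nat.mod_self, hi, add_zero]
  simpa only [hsucc] using hp (i + x.val)

variable {Q : GentleData}

lemma AGzero_ne_zero_iff {ℓ : ℕ} (hℓ : 1 ≤ ℓ) :
    AGzero Q ℓ ≠ 0 ↔ ∃ c : ZMod ℓ → Q.A, IsOCFCycle Q c ∧ Function.Injective c := by
  have : NeZero ℓ := ⟨by lia⟩
  have : Finite (Quotient (ocfCycleSetoid Q ℓ)) := inferInstance
  rw [AGzero, Nat.card_ne_zero, and_iff_left this, nonempty_quotient_iff, nonempty_subtype]

lemma exists_AGzero_ne_zero_iff_exists_forbiddenStep_chain :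
    (∃ ℓ : ℕ, 1 ≤ ℓ ∧ AGzero Q ℓ ≠ 0) ↔
      ∃ p : ℕ → Q.A, ∀ i, ForbiddenStep Q (p i) (p (i + 1)) := by
  refine ⟨fun ⟨ℓ, hℓ, h⟩ ↦ ?_, fun ⟨p, hp⟩ ↦ ?_⟩
  · obtain ⟨c, hc, -⟩ := (AGzero_ne_zero_iff hℓ).1 h
    exact ⟨fun i ↦ c i, fun i ↦ by simpa [ForbiddenStep] using hc i⟩
  · obtain ⟨ℓ, hℓ, hc⟩ := exists_injective_cycle_of_chain hp
    exact ⟨ℓ, hℓ, (AGzero_ne_zero_iff hℓ).2 hc⟩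

end ForbiddenCycle

section GlobalDimension

variable {k : Type} [Field k] {Q : GentleData}

lemma exists_hasProjectiveDimensionLE_arrowModule
    (hchain : ¬ ∃ p : ℕ → Q.A, ∀ i, ForbiddenStep Q (p i) (p (i + 1))) (a : Q.A) :
    ∃ n, HasProjectiveDimensionLE
      (ModuleCat.of (GentleAlgebra k Q)ᵐᵒᵖ (arrowModule k Q a)) n := by
  have hwf : WellFounded fun b a ↦ ForbiddenStep Q a b :=
    wellFounded_iff_isEmpty_descending_chain.2 ⟨fun p ↦ hchain ⟨p.1, p.2⟩⟩
  induction a using hwf.induction with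
  | _ a ih =>
    choose! f hf using ih
    refine ⟨Finset.univ.sup f + 1, hasProjectiveDimensionLE_succ_arrowModule_iff.2 fun b hb ↦ ?_⟩
    have := hf b hb
    exact CategoryTheory.hasProjectiveDimensionLT_of_ge _ (f b + 1) _
      (Nat.succ_le_succ (Finset.le_sup (Finset.mem_univ b)))

lemma exists_forall_hasProjectiveDimensionLE_arrowModule
    (hchain : ¬ ∃ p : ℕ → Q.A, ∀ i, ForbiddenStep Q (p i) (p (i + 1))) :
    ∃ n, ∀ a, HasProjectiveDimensionLE
      (ModuleCat.of (GentleAlgebra k Q)ᵐᵒᵖ (arrowModule k Q a)) n := by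
  choose f hf using exists_hasProjectiveDimensionLE_arrowModule (k := k) hchain
  exact ⟨Finset.univ.sup f, fun a ↦ CategoryTheory.hasProjectiveDimensionLT_of_ge _ (f a + 1) _
    (Nat.succ_le_succ (Finset.le_sup (Finset.mem_univ a)))⟩

lemma isArtinianRing_of_hasBoundedPaths (hQ : HasBoundedPaths Q) :
    IsArtinianRing (GentleAlgebra k Q)ᵐᵒᵖ := by
  have := finite_gentleAlgebra_of_hasBoundedPaths (k := k) hQ
  have : Module.Finite k (GentleAlgebra k Q)ᵐᵒᵖ := .equiv (opLinearEquiv k)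
  exact .of_finite k _

theorem globalDim_eq_top_iff_exists_forbiddenStep_chain (hQ : HasBoundedPaths Q) :
    globalDim (GentleAlgebra k Q)ᵐᵒᵖ = ⊤ ↔
      ∃ p : ℕ → Q.A, ∀ i, ForbiddenStep Q (p i) (p (i + 1)) := by
  refine ⟨fun htop ↦ ?_, fun ⟨p, hp⟩ ↦ ?_⟩
  · by_contra hchain
    obtain ⟨n, hn⟩ := exists_forall_hasProjectiveDimensionLE_arrowModule (k := k) hchain
    have := isArtinianRing_of_hasBoundedPaths (k := k) hQ
    have hle : globalDim (GentleAlgebra k Q)ᵐᵒᵖ ≤ (n + 1 : ℕ) :=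
      globalDim_le_of_isArtinianRing _ (hasProjectiveDimensionLE_succ_of_isSimpleModule hQ hn)
    exact ENat.natCast_ne_top _ (top_le_iff.1 (htop ▸ hle))
  · have : Module.Finite (GentleAlgebra k Q)ᵐᵒᵖ (arrowModule k Q (p 0)) :=
      Module.Finite.span_singleton ..
    exact globalDim_eq_top_of_projDim_eq_top _
      (projDim_eq_top_of_forall_not_hasProjectiveDimensionLE fun n ↦
        not_hasProjectiveDimensionLE_arrowModule hQ hp n 0)

end GlobalDimension

theorem globalDim_eq_top_iff_AGzero_ne_zero_general (k : Type) [Field k] (Q : GentleData)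
    (hQ : HasBoundedPaths Q) :
    globalDim (GentleAlgebra k Q)ᵐᵒᵖ = ⊤ ↔ ∃ ℓ : ℕ, 1 ≤ ℓ ∧ AGzero Q ℓ ≠ 0 :=
  (globalDim_eq_top_iff_exists_forbiddenStep_chain hQ).trans
    exists_AGzero_ne_zero_iff_exists_forbiddenStep_chain.symm

/-- For a gentle algebra `A = kQ/I` with AG-invariant `φ_A`,
one has `gl.dim A = ∞` if and only if `φ_A(0, ℓ) ≠ 0` for some `ℓ ≥ 1`. -/
theorem globalDim_eq_top_iff_AGzero_ne_zero
    (k : Type) [Field k] [IsAlgClosed k] (Q : GentleData) (hQ : IsGentle Q) :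
    globalDim (GentleAlgebra k Q)ᵐᵒᵖ = ⊤ ↔ ∃ ℓ : ℕ, 1 ≤ ℓ ∧ AGzero Q ℓ ≠ 0 :=
  globalDim_eq_top_iff_AGzero_ne_zero_general k Q hQ.2.2.2.2.2.2.2
end
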